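/- arXiv:2503.03905 — 14 statements merged into one kernel-verified Lean document; each statement's English description precedes it below -/
import Mathlib

section
/- Let t ≤ m be positive integers, F = GaloisField 2 m, T = GaloisField 2 t. Let ⋆ be a left pre-quasifield operation on F, let d : F → F → F be a right-division map for ⋆, and let γ : F → T be balanced. Define f₁ : F × F → T by f₁(x,y) = γ(d(x,y)). Then the distance of f₁ to affine functions satisfies dA(f₁) = (2^t − 1) · 2^(m−t) · (2^m − 1) (i.e. dA(f₁) = (1 − 2^(−t))(2^(2m) − 2^m)). -/
/-- The distance of `f : V → W` to the set of affine maps: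
the minimum Hamming distance `|{x | f x ≠ A x}|` over affine maps `A x = L x + c`. -/
noncomputable def dA {V W : Type*} [AddCommGroup V] [AddCommGroup W]
    [Module (ZMod 2) V] [Module (ZMod 2) W] (f : V → W) : ℕ :=
  sInf { d : ℕ | ∃ (L : V →ₗ[ZMod 2] W) (c : W), d = {x | f x ≠ L x + c}.ncard }

open Finset

section Division

variable {G : Type*} [AddCommGroup G] [Fintype G] {star d : G → G → G}

/-- A sum over `G × G` depending on the quotient `d x y` splits into the line `y = 0` and the
points `(star a y, y)` with `y ≠ 0`, on which the quotient is `a`. -/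
lemma sum_rightDiv_eq [DecidableEq G] {M : Type*} [AddCommMonoid M]
    (hbij : ∀ a, a ≠ 0 → Function.Bijective fun x => star x a)
    (hd0 : ∀ x, d x 0 = 0) (hdiv : ∀ x y, y ≠ 0 → star (d x y) y = x)
    (h : G → G × G → M) :
    ∑ p : G × G, h (d p.1 p.2) p =
      ∑ x, h 0 (x, 0) + ∑ y ∈ univ.erase 0, ∑ a, h a (star a y, y) := by
  rw [Fintype.sum_prod_type_right, ← add_sum_erase _ _ (mem_univ (0 : G))]
  simp only [hd0]
  congr 1
  refine sum_congr rfl fun y hy => ?_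
  have hy0 : y ≠ 0 := ne_of_mem_erase hy
  refine ((hbij y hy0).sum_comp fun x => h (d x y) (x, y)).symm.trans
    (sum_congr rfl fun a _ => ?_)
  have hda : d (star a y) y = a := (hbij y hy0).injective (hdiv _ y hy0)
  simp only [hda]

/-- Left multiplication as an additive map. -/
def starAddHom (hdist : ∀ x y z, star x (y + z) = star x y + star x z) (a : G) : G →+ G :=
  AddMonoidHom.mk' (star a) (hdist a)

/-- Two distinct left multiplications differ by a surjective map. -/
lemma exists_star_sub_star_eq
    (hdist : ∀ x y z, star x (y + z) = star x y + star x z)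
    (hbij : ∀ a, a ≠ 0 → Function.Bijective fun x => star x a)
    {a b : G} (hab : a ≠ b) (x : G) : ∃ y, star a y - star b y = x := by
  have hinj : Function.Injective (starAddHom hdist a - starAddHom hdist b) := by
    rw [injective_iff_map_eq_zero]
    intro y hy
    by_contra hy0
    exact hab ((hbij y hy0).injective (sub_eq_zero.mp hy))
  exact Finite.surjective_of_injective hinj x

/-- The partial-spread bound: a character sum twisted by a mean-zero function of the quotient
has absolute value at most `|G|`. -/
lemma norm_sum_rightDiv_mul_addChar_le
    (hdist : ∀ x y z, star x (y + z) = star x y + star x z)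
    (hbij : ∀ a, a ≠ 0 → Function.Bijective fun x => star x a)
    (hd0 : ∀ x, d x 0 = 0) (hdiv : ∀ x y, y ≠ 0 → star (d x y) y = x)
    (ε : G → ℂ) (hε : ∀ a, ‖ε a‖ ≤ 1) (hsum : ∑ a, ε a = 0) (χ : AddChar (G × G) ℂ) :
    ‖∑ p : G × G, ε (d p.1 p.2) * χ p‖ ≤ Fintype.card G := by
  classical
  have hz (a : G) : star a 0 = 0 := (starAddHom hdist a).map_zero
  let χinf : AddChar G ℂ := χ.compAddMonoidHom (AddMonoidHom.inl G G)
  let χa (a : G) : AddChar G ℂ :=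
    χ.compAddMonoidHom ((starAddHom hdist a).prod (AddMonoidHom.id G))
  have hχinf (x : G) : χinf x = χ (x, 0) := rfl
  have hχa (a y : G) : χa a y = χ (star a y, y) := rfl
  have hsplit : ∑ p : G × G, ε (d p.1 p.2) * χ p =
      ε 0 * ∑ x, χinf x + ∑ a, ε a * ∑ y, χa a y := by
    rw [sum_rightDiv_eq hbij hd0 hdiv fun a p => ε a * χ p, mul_sum]
    simp only [hχinf, hχa, mul_sum]
    rw [sum_comm (s := univ) (t := univ) (f := fun a y => ε a * χ (star a y, y)),
      ← add_sum_erase univ (fun y => ∑ a, ε a * χ (star a y, y)) (mem_univ (0 : G))]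
    simp [hz, ← Prod.zero_eq_mk, hsum]
  have hext {a : G} (h1 : χinf = 0) (h2 : χa a = 0) : ∀ p, χ p = 1 := by
    rintro ⟨x, y⟩
    have e : (x, y) = (star a y, y) + (x - star a y, 0) := by simp
    rw [e, AddChar.map_add_eq_mul, ← hχa, ← hχinf, h1, h2]
    simp
  rw [hsplit]
  simp only [AddChar.sum_eq_ite]
  have hq : (0 : ℝ) ≤ Fintype.card G := by positivity
  have hbound (a : G) : ‖ε a * (Fintype.card G : ℂ)‖ ≤ Fintype.card G := by
    rw [norm_mul, Complex.norm_natCast]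
    exact mul_le_of_le_one_left hq (hε a)
  by_cases hinf : χinf = 0
  · have hrest : ∑ a, ε a * (if χa a = 0 then (Fintype.card G : ℂ) else 0) = 0 := by
      by_cases hex : ∃ a, χa a = 0
      · obtain ⟨a, ha⟩ := hex
        have hall (b : G) : χa b = 0 := by
          ext y
          rw [hχa, hext hinf ha]
          rfl
        simp [hall, ← sum_mul, hsum]
      · push Not at hex
        simp [hex]
    rw [hrest, if_pos hinf, add_zero]
    exact hbound 0
  · rw [if_neg hinf, mul_zero, zero_add]
    by_cases hex : ∃ a, χa a = 0
    · obtain ⟨a, ha⟩ := hex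
      have huniq (b : G) (hba : b ≠ a) : χa b ≠ 0 := by
        intro hb
        refine hinf (DFunLike.ext _ _ fun x => ?_)
        obtain ⟨y, rfl⟩ := exists_star_sub_star_eq hdist hbij hba x
        have e : (star b y - star a y, (0 : G)) = (star b y, y) - (star a y, y) := by simp
        rw [hχinf, e, AddChar.map_sub_eq_div, ← hχa, ← hχa, ha, hb]
        simp
      rw [sum_eq_single a (fun b _ hb => by rw [if_neg (huniq b hb), mul_zero])
        (by simp), if_pos ha]
      exact hbound a
    · push Not at hex
      simp [hex]

end Division

/-- A function all of whose nontrivial character sums are at most `B` in absolute value has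
few zeros. -/
lemma card_mul_card_zeros_le {V T : Type*} [Fintype V] [AddCommGroup T] [Fintype T]
    [DecidableEq T] (g : V → T) (B : ℝ)
    (hB : ∀ ψ : AddChar T ℂ, ψ ≠ 0 → ‖∑ v, ψ (g v)‖ ≤ B) :
    (Fintype.card T : ℝ) * #{v | g v = 0} ≤
      Fintype.card V + (Fintype.card T - 1) * B := by
  classical
  have key : ((Fintype.card T * #{v | g v = 0} : ℝ) : ℂ) =
      ∑ ψ : AddChar T ℂ, ∑ v, ψ (g v) := by
    rw [sum_comm]
    simp only [AddChar.sum_apply_eq_ite]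
    rw [← sum_filter, sum_const, nsmul_eq_mul]
    push_cast
    ring
  have hnorm : (Fintype.card T : ℝ) * #{v | g v = 0} =
      ‖∑ ψ : AddChar T ℂ, ∑ v, ψ (g v)‖ := by
    rw [← key, Complex.norm_real, Real.norm_of_nonneg (by positivity)]
  rw [hnorm, ← add_sum_erase _ _ (mem_univ (0 : AddChar T ℂ))]
  refine (norm_add_le _ _).trans (add_le_add (by simp) ?_)
  refine (norm_sum_le_of_le _ fun ψ hψ => hB ψ (ne_of_mem_erase hψ)).trans ?_
  rw [sum_const, nsmul_eq_mul, card_erase_of_mem (mem_univ _), card_univ, AddChar.card_eq,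
    Nat.cast_sub Fintype.card_pos, Nat.cast_one]

/-- A nontrivial character composed with a map with fibers of constant size sums to zero. -/
lemma sum_addChar_comp_eq_zero {A T : Type*} [Fintype A] [AddCommGroup T] [Fintype T]
    [DecidableEq T] {γ : A → T} {k : ℕ} (hγ : ∀ b, #{a | γ a = b} = k)
    {ψ : AddChar T ℂ} (hψ : ψ ≠ 0) : ∑ a, ψ (γ a) = 0 := by
  rw [← sum_fiberwise' univ γ fun b => ψ b]
  simp only [sum_const, hγ, ← smul_sum]
  rw [AddChar.sum_eq_zero_iff_ne_zero.mpr hψ, smul_zero]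

theorem dist_to_affine_of_dillon_type_bent
    (m t : ℕ) (hm : 0 < m) (ht : 0 < t) (htm : t ≤ m)
    (star : GaloisField 2 m → GaloisField 2 m → GaloisField 2 m)
    (hz1 : ∀ x, star x 0 = 0) (hz2 : ∀ x, star 0 x = 0)
    (hdist : ∀ x y z, star x (y + z) = star x y + star x z)
    (hbij1 : ∀ a, a ≠ 0 → Function.Bijective fun x => star x a)
    (hbij2 : ∀ a, a ≠ 0 → Function.Bijective fun x => star a x)
    (d : GaloisField 2 m → GaloisField 2 m → GaloisField 2 m)
    (hd0 : ∀ x, d x 0 = 0)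
    (hdiv : ∀ x y, y ≠ 0 → star (d x y) y = x)
    (γ : GaloisField 2 m → GaloisField 2 t)
    (hγ : ∀ b, {a | γ a = b}.ncard = 2 ^ (m - t)) :
    dA (fun p : GaloisField 2 m × GaloisField 2 m => γ (d p.1 p.2)) =
      (2 ^ t - 1) * 2 ^ (m - t) * (2 ^ m - 1) := by
  classical
  have : Fintype (GaloisField 2 m) := Fintype.ofFinite _
  have : Fintype (GaloisField 2 t) := Fintype.ofFinite _
  have hF : Fintype.card (GaloisField 2 m) = 2 ^ m := by
    rw [← Nat.card_eq_fintype_card, GaloisField.card 2 m hm.ne']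
  have hT : Fintype.card (GaloisField 2 t) = 2 ^ t := by
    rw [← Nat.card_eq_fintype_card, GaloisField.card 2 t ht.ne']
  have hγ' (b : GaloisField 2 t) : #{a | γ a = b} = 2 ^ (m - t) := by
    rw [← hγ b, ← Set.ncard_coe_finset]
    simp
  have hpow : 2 ^ t * 2 ^ (m - t) = 2 ^ m := by rw [← pow_add, Nat.add_sub_cancel' htm]
  have hncard (L : GaloisField 2 m × GaloisField 2 m →ₗ[ZMod 2] GaloisField 2 t)
      (c : GaloisField 2 t) :
      {p : GaloisField 2 m × GaloisField 2 m | γ (d p.1 p.2) ≠ L p + c}.ncard =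
        #{p : GaloisField 2 m × GaloisField 2 m | γ (d p.1 p.2) ≠ L p + c} := by
    rw [← Set.ncard_coe_finset]
    simp
  refine le_antisymm (Nat.sInf_le ⟨0, γ 0, ?_⟩) (le_csInf ⟨_, 0, 0, rfl⟩ ?_)
  · rw [hncard, card_filter]
    simp only [LinearMap.zero_apply, zero_add]
    rw [sum_rightDiv_eq hbij1 hd0 hdiv fun a _ => if γ a ≠ γ 0 then 1 else 0]
    have hne : #{a | γ a ≠ γ 0} = (2 ^ t - 1) * 2 ^ (m - t) := by
      have hsplit := card_filter_add_card_filter_not (s := univ) fun a => γ a = γ 0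
      rw [hγ', card_univ, hF] at hsplit
      rw [Nat.sub_mul, hpow, one_mul]
      exact Nat.eq_sub_of_add_eq' hsplit
    simp only [← card_filter, hne, ne_eq, not_true_eq_false, if_false, sum_const_zero, zero_add,
      sum_const, smul_eq_mul, card_erase_of_mem (mem_univ _), card_univ, hF]
    ring
  · rintro _ ⟨L, c, rfl⟩
    rw [hncard]
    have hzeros := card_mul_card_zeros_le
      (fun p : GaloisField 2 m × GaloisField 2 m => γ (d p.1 p.2) - (L p + c)) (2 ^ m)
      fun ψ hψ => by
        have hfactor (p : GaloisField 2 m × GaloisField 2 m) :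
            ψ (γ (d p.1 p.2) - (L p + c)) =
              ψ (-c) * (ψ (γ (d p.1 p.2)) * ψ.compAddMonoidHom (-L.toAddMonoidHom) p) := by
          rw [AddChar.compAddMonoidHom_apply, ← AddChar.map_add_eq_mul, ← AddChar.map_add_eq_mul]
          congr 1
          simp only [AddMonoidHom.neg_apply, LinearMap.toAddMonoidHom_coe]
          abel
        simp only [hfactor]
        rw [← mul_sum, norm_mul, AddChar.norm_apply, one_mul]
        have hle := norm_sum_rightDiv_mul_addChar_le hdist hbij1 hd0 hdiv
          (fun a => ψ (γ a)) (fun a => (AddChar.norm_apply ψ _).le)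
          (sum_addChar_comp_eq_zero hγ' hψ) (ψ.compAddMonoidHom (-L.toAddMonoidHom))
        rwa [hF, Nat.cast_pow, Nat.cast_ofNat] at hle
    simp only [sub_eq_zero, Fintype.card_prod, hF, hT] at hzeros
    have hsplit := card_filter_add_card_filter_not (s := univ)
      fun p : GaloisField 2 m × GaloisField 2 m => γ (d p.1 p.2) = L p + c
    rw [card_univ, Fintype.card_prod, hF] at hsplit
    have hsplit' := congrArg (Nat.cast (R := ℝ)) hsplit
    have hpow' := congrArg (Nat.cast (R := ℝ)) hpow
    rw [← Nat.cast_le (α := ℝ)]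
    push_cast [Nat.one_le_two_pow] at hzeros hsplit' hpow' ⊢
    have ht0 : (0 : ℝ) < 2 ^ t := by positivity
    refine le_of_mul_le_mul_left ?_ ht0
    rw [← hpow'] at hzeros hsplit' ⊢
    simp only [ne_eq]
    linear_combination hzeros - 2 ^ t * hsplit'
end

section
/- Let t ≤ m be positive integers, F = GaloisField 2 m, T = GaloisField 2 t. Let ⋆ be a left pre-quasifield operation on F, let τ : F → T be a surjective 𝔽₂-linear map, σ : F → F a bijection, and h : F → T an arbitrary function. Define f₂ : F × F → T by f₂(x,y) = τ(σ(y) ⋆ x) + h(y). Then the distance of f₂ to affine functions satisfies dA(f₂) = (2^t − 1) · 2^(m−t) · (2^m − 1) (i.e. dA(f₂) = (1 − 2^(−t))(2^(2m) − 2^m)). -/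
open Finset in
/-- Every fiber of an additive map has at most as many elements as its kernel. -/
lemma card_fiber_le_card_ker {G H : Type*} [AddCommGroup G] [Fintype G] [AddCommGroup H]
    [DecidableEq H] (φ : G →+ H) (b : H) : #{x | φ x = b} ≤ #{x | φ x = 0} := by
  by_cases hb : b ∈ Set.range φ
  · exact (AddMonoidHom.card_fiber_eq_of_mem_range φ hb ⟨0, map_zero φ⟩).le
  · rw [Finset.filter_false_of_mem fun x _ hx => hb ⟨x, hx⟩]
    simp

open Finset in
/-- All fibers of a surjective additive map have the same cardinality. -/
lemma card_fiber_mul_card {G H : Type*} [AddCommGroup G] [Fintype G] [AddCommGroup H] [Fintype H]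
    [DecidableEq H] (φ : G →+ H) (hφ : Function.Surjective φ) (b : H) :
    #{x | φ x = b} * Fintype.card H = Fintype.card G := by
  have hfib : ∀ c ∈ (univ : Finset H), #{x | φ x = c} = #{x | φ x = b} := fun c _ =>
    AddMonoidHom.card_fiber_eq_of_mem_range φ (hφ c) (hφ b)
  have hsum := card_eq_sum_card_fiberwise (f := φ) (s := univ) (t := univ) (fun _ _ => by simp)
  rw [sum_congr rfl hfib, sum_const, smul_eq_mul, card_univ, card_univ, mul_comm] at hsum
  exact hsum.symm

/-- Precomposition with a bijection does not change the number of solutions. -/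
lemma card_filter_comp_bijective {α β : Type*} [Fintype α] [Fintype β] (p : β → Prop)
    [DecidablePred p] {e : α → β} (he : Function.Bijective e) :
    (Finset.univ.filter fun x => p (e x)).card = (Finset.univ.filter p).card :=
  Finset.card_bijective e he (by simp)

/-- Counting pairs by their second coordinate. -/
lemma ncard_setOf_prod_eq_sum {α β : Type*} [Fintype α] [Fintype β] (p : α × β → Prop)
    [DecidablePred p] :
    {q | p q}.ncard = ∑ y, (Finset.univ.filter fun x => p (x, y)).card := by
  rw [Set.ncard_eq_toFinset_card', Set.toFinset_ofPred]
  simp only [Finset.card_filter]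
  exact Fintype.sum_prod_type_right _

/-- A sum which takes the value `k` at all points except possibly `a`. -/
lemma sum_eq_add_card_sub_one_mul {α : Type*} [Fintype α] [DecidableEq α] (u : α → ℕ) (a : α)
    (k : ℕ) (hu : ∀ x, x ≠ a → u x = k) : ∑ x, u x = u a + (Fintype.card α - 1) * k := by
  rw [← Finset.add_sum_erase _ _ (Finset.mem_univ a),
    Finset.sum_congr rfl fun x hx => hu x (Finset.ne_of_mem_erase hx)]
  simp

section QuasifieldType

variable {F T : Type*} [AddCommGroup F] [Fintype F] [DecidableEq F] [AddCommGroup T] [DecidableEq T]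
  {star : F → F → F} {σ : F → F} {N : ℕ}

open Finset in
/-- The number of points at which `τ (σ y ⋆ x) + h y` agrees with a function which is additive
in `x`. -/
lemma card_agree_additive_le (hz1 : ∀ x, star x 0 = 0)
    (hdist : ∀ x y z, star x (y + z) = star x y + star x z)
    (hbij : ∀ a, a ≠ 0 → Function.Bijective fun x => star x a) (hσ : Function.Bijective σ)
    (τ : F →+ T) (hN : ∀ b, #{x | τ x = b} = N) (l : F →+ T) (h g : F → T) :
    {p : F × F | τ (star (σ p.2) p.1) + h p.2 = l p.1 + g p.2}.ncard ≤
      Fintype.card F + (Fintype.card F - 1) * N := by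
  let φ : F → F →+ T := fun y =>
    AddMonoidHom.mk' (fun x => τ (star (σ y) x) - l x) fun a b => by
      rw [hdist, map_add, map_add]; abel
  calc _ = ∑ y, #{x | φ y x = g y - h y} := by
        rw [ncard_setOf_prod_eq_sum]
        refine sum_congr rfl fun y _ => congrArg card (filter_congr fun x _ => ?_)
        change _ ↔ τ (star (σ y) x) - l x = g y - h y
        rw [sub_eq_sub_iff_add_eq_add, add_comm (g y)]
    _ ≤ ∑ y, #{x | φ y x = 0} := sum_le_sum fun y _ => card_fiber_le_card_ker (φ y) _
    _ = ∑ x, #{y | τ (star (σ y) x) = l x} := by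
        simp only [card_filter]
        rw [sum_comm]
        simp only [φ, AddMonoidHom.mk'_apply, sub_eq_zero]
    _ = _ := by
        rw [sum_eq_add_card_sub_one_mul _ 0 N fun x hx => ?_]
        · simp [hz1]
        · rw [← hN (l x)]
          exact card_filter_comp_bijective (fun z => τ z = l x) ((hbij x hx).comp hσ)

open Finset in
/-- The number of points at which `τ (σ y ⋆ x) + h y` agrees with the constant `h y₀`,
where `σ y₀ = 0`. -/
lemma card_agree_const (hz2 : ∀ x, star 0 x = 0)
    (hbij : ∀ a, a ≠ 0 → Function.Bijective fun x => star a x) (hσ : Function.Bijective σ)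
    (τ : F →+ T) (hN : ∀ b, #{x | τ x = b} = N) (h : F → T) {y₀ : F} (hy₀ : σ y₀ = 0) :
    {p : F × F | τ (star (σ p.2) p.1) + h p.2 = h y₀}.ncard =
      Fintype.card F + (Fintype.card F - 1) * N := by
  rw [ncard_setOf_prod_eq_sum, sum_eq_add_card_sub_one_mul _ y₀ N fun y hy => ?_]
  · simp [hy₀, hz2]
  · rw [← hN (h y₀ - h y)]
    simp only [← eq_sub_iff_add_eq]
    exact card_filter_comp_bijective (fun z => τ z = h y₀ - h y)
      (hbij (σ y) fun h0 => hy (hσ.injective (h0.trans hy₀.symm)))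

end QuasifieldType

/-- The number of disagreements is complementary to the number of agreements. -/
lemma ncard_ne_add_ncard_eq {α β : Type*} [Finite α] (f g : α → β) :
    {x | f x ≠ g x}.ncard + {x | f x = g x}.ncard = Nat.card α := by
  rw [add_comm]
  exact Set.ncard_add_ncard_compl {x | f x = g x}

theorem dist_to_affine_of_quasifield_type_bent
    (m t : ℕ) (hm : 0 < m) (ht : 0 < t) (htm : t ≤ m)
    (star : GaloisField 2 m → GaloisField 2 m → GaloisField 2 m)
    (hz1 : ∀ x, star x 0 = 0) (hz2 : ∀ x, star 0 x = 0)
    (hdist : ∀ x y z, star x (y + z) = star x y + star x z)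
    (hbij1 : ∀ a, a ≠ 0 → Function.Bijective fun x => star x a)
    (hbij2 : ∀ a, a ≠ 0 → Function.Bijective fun x => star a x)
    (τ : GaloisField 2 m →ₗ[ZMod 2] GaloisField 2 t) (hτ : Function.Surjective τ)
    (σ : GaloisField 2 m → GaloisField 2 m) (hσ : Function.Bijective σ)
    (h : GaloisField 2 m → GaloisField 2 t) :
    dA (fun p : GaloisField 2 m × GaloisField 2 m => τ (star (σ p.2) p.1) + h p.2) =
      (2 ^ t - 1) * 2 ^ (m - t) * (2 ^ m - 1) := by
  classical
  have : Fintype (GaloisField 2 m) := Fintype.ofFinite _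
  have : Fintype (GaloisField 2 t) := Fintype.ofFinite _
  have hF : Fintype.card (GaloisField 2 m) = 2 ^ m := by
    rw [← Nat.card_eq_fintype_card, GaloisField.card 2 m hm.ne']
  have hT : Fintype.card (GaloisField 2 t) = 2 ^ t := by
    rw [← Nat.card_eq_fintype_card, GaloisField.card 2 t ht.ne']
  have hpow : 2 ^ m = 2 ^ (m - t) * 2 ^ t := by rw [← pow_add, Nat.sub_add_cancel htm]
  have hN : ∀ b, (Finset.univ.filter fun x => τ.toAddMonoidHom x = b).card = 2 ^ (m - t) := by
    intro b
    have hb := card_fiber_mul_card τ.toAddMonoidHom hτ b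
    rw [hF, hT, hpow] at hb
    exact Nat.eq_of_mul_eq_mul_right (by positivity) hb
  have htotal : (2 ^ t - 1) * 2 ^ (m - t) * (2 ^ m - 1) + (2 ^ m + (2 ^ m - 1) * 2 ^ (m - t)) =
      Nat.card (GaloisField 2 m × GaloisField 2 m) := by
    rw [Nat.card_prod, Nat.card_eq_fintype_card, hF]
    obtain ⟨a, ha⟩ := Nat.exists_eq_add_of_le' (Nat.one_le_two_pow (n := t))
    obtain ⟨b, hb⟩ := Nat.exists_eq_add_of_le' (Nat.one_le_two_pow (n := m))
    rw [ha, hb] at hpow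
    rw [ha, hb, Nat.add_sub_cancel, Nat.add_sub_cancel]
    linear_combination b * hpow.symm
  refine le_antisymm (Nat.sInf_le ?_) (le_csInf ⟨_, 0, 0, rfl⟩ ?_)
  · obtain ⟨y₀, hy₀⟩ := hσ.surjective 0
    refine ⟨0, h y₀, ?_⟩
    have hagree := card_agree_const hz2 hbij2 hσ τ.toAddMonoidHom hN h hy₀
    have hcompl := ncard_ne_add_ncard_eq
      (fun p : GaloisField 2 m × GaloisField 2 m => τ (star (σ p.2) p.1) + h p.2) fun _ => h y₀
    rw [hF] at hagree
    simp only [LinearMap.toAddMonoidHom_coe] at hagree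
    simp only [LinearMap.zero_apply, zero_add]
    lia
  · rintro _ ⟨L, c, rfl⟩
    have hagree := card_agree_additive_le hz1 hdist hbij1 hσ τ.toAddMonoidHom hN
      (L ∘ₗ LinearMap.inl _ _ _).toAddMonoidHom h fun y => L (0, y) + c
    have hcompl := ncard_ne_add_ncard_eq
      (fun p : GaloisField 2 m × GaloisField 2 m => τ (star (σ p.2) p.1) + h p.2)
      fun p => L p + c
    have hL : ∀ p : GaloisField 2 m × GaloisField 2 m, L (p.1, 0) + (L (0, p.2) + c) = L p + c := by
      intro p
      rw [← add_assoc, ← map_add, Prod.mk_add_mk, add_zero, zero_add]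
    rw [hF] at hagree
    simp only [LinearMap.toAddMonoidHom_coe, LinearMap.comp_apply, LinearMap.inl_apply,
      hL] at hagree
    lia
end

section
/- Let n ≥ 2 be an even integer, F = GaloisField 2 n, and h₁ : F → F the Field Inverse Function h₁(x) = x^(2^n − 2). Then, as real numbers, 2^n − √(2^(n+1)) − 3/2 ≤ dA(h₁), and dA(h₁) ≤ 2^n − 2^(n/2) − 2. (In particular dA(h₁) ≤ 2^n − 2^(n/2) − 1, the Liu–Mesnager–Chen bound.) -/
open Finset

/-- Two pairs of nonzero elements with equal nonzero sums and equal sums of inverses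
agree up to order. -/
theorem eq_or_eq_of_add_eq_of_inv_add_inv_eq {F : Type*} [Field F] {x y z w : F}
    (hx : x ≠ 0) (hy : y ≠ 0) (hz : z ≠ 0) (hw : w ≠ 0) (hne : x + y ≠ 0)
    (hadd : z + w = x + y) (hinv : z⁻¹ + w⁻¹ = x⁻¹ + y⁻¹) :
    (z = x ∧ w = y) ∨ (z = y ∧ w = x) := by
  have hmul : z * w = x * y := by
    rw [inv_add_inv hz hw, inv_add_inv hx hy, hadd,
      div_eq_div_iff (mul_ne_zero hz hw) (mul_ne_zero hx hy)] at hinv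
    exact (mul_left_cancel₀ hne hinv).symm
  have hroot : (z - x) * (z - y) = 0 := by linear_combination z * hadd - hmul
  rcases mul_eq_zero.mp hroot with h | h
  · have hzx := sub_eq_zero.mp h
    exact Or.inl ⟨hzx, by linear_combination hadd - hzx⟩
  · have hzy := sub_eq_zero.mp h
    exact Or.inr ⟨hzy, by linear_combination hadd - hzy⟩

/-- A set of nonzero elements on which inversion agrees with an affine map is a Sidon set,
which bounds its size. -/
theorem card_mul_card_sub_one_le_of_inv_eq_affine {F : Type*} [Field F] [Fintype F]
    [CharP F 2] (L : F →+ F) (c : F) (T : Finset F)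
    (hT0 : ∀ x ∈ T, x ≠ 0) (hT : ∀ x ∈ T, x⁻¹ = L x + c) :
    #T * (#T - 1) ≤ 2 * (Fintype.card F - 1) := by
  classical
  have hsum : ∀ p ∈ T.offDiag, p.1 + p.2 ∈ (univ.erase 0 : Finset F) := by
    intro p hp
    obtain ⟨-, -, hne⟩ := mem_offDiag.mp hp
    simpa [CharTwo.add_eq_zero] using hne
  have hinv : ∀ x ∈ T, ∀ y ∈ T, x⁻¹ + y⁻¹ = L (x + y) := by
    intro x hx y hy
    rw [hT x hx, hT y hy, map_add]
    linear_combination CharTwo.add_self_eq_zero c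
  have hfiber : ∀ a ∈ (univ.erase 0 : Finset F),
      #{p ∈ T.offDiag | p.1 + p.2 = a} ≤ 2 := by
    intro a ha
    rcases ({p ∈ T.offDiag | p.1 + p.2 = a}).eq_empty_or_nonempty with h | ⟨⟨x, y⟩, hxy⟩
    · simp [h]
    · refine (card_le_card (t := {(x, y), (y, x)}) ?_).trans card_le_two
      rintro ⟨z, w⟩ hzw
      simp only [mem_filter, mem_offDiag] at hxy hzw
      obtain ⟨⟨hx, hy, -⟩, hxy⟩ := hxy
      obtain ⟨⟨hz, hw, -⟩, hzw⟩ := hzw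
      have := eq_or_eq_of_add_eq_of_inv_add_inv_eq (hT0 x hx) (hT0 y hy) (hT0 z hz) (hT0 w hw)
        (hxy ▸ ne_of_mem_erase ha) (hzw.trans hxy.symm)
        (by rw [hinv z hz w hw, hinv x hx y hy, hxy, hzw])
      simpa using this
  have := card_le_mul_card_image_of_maps_to hsum 2 hfiber
  rwa [offDiag_card, card_erase_of_mem (mem_univ _), card_univ, ← Nat.mul_sub_one] at this

/-- In a field with `q ^ 2` elements there are `q + 1` solutions of `x ^ (q + 1) = 1`. -/
theorem card_filter_pow_succ_eq_one {F : Type*} [Field F] [Fintype F] [DecidableEq F] {q : ℕ}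
    (hcard : Fintype.card F = q ^ 2) : #{x : F | x ^ (q + 1) = 1} = q + 1 := by
  obtain ⟨g, hg⟩ := IsCyclic.exists_ofOrder_eq_natCard (α := Fˣ)
  rw [Nat.card_units, Nat.card_eq_fintype_card, hcard] at hg
  have hζ : IsPrimitiveRoot ((g ^ (q - 1) : Fˣ) : F) (q + 1) := by
    rw [IsPrimitiveRoot.coe_units_iff]
    refine (IsPrimitiveRoot.orderOf g).pow (orderOf_pos g) ?_
    rw [hg, mul_comm]
    simpa using Nat.sq_sub_sq q 1
  refine Eq.trans (congrArg card ?_) hζ.card_nthRootsFinset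
  ext x
  simp [Polynomial.mem_nthRootsFinset]

theorem dist_to_affine_of_inverse_function
    (n : ℕ) (hn : 2 ≤ n) (hne : Even n)
    (h₁ : GaloisField 2 n → GaloisField 2 n)
    (hh₁ : ∀ x, h₁ x = x ^ (2 ^ n - 2)) :
    (2 : ℝ) ^ n - Real.sqrt (2 ^ (n + 1)) - 3 / 2 ≤ (dA h₁ : ℝ) ∧
      (dA h₁ : ℝ) ≤ 2 ^ n - 2 ^ (n / 2) - 2 := by
  classical
  have : Fintype (GaloisField 2 n) := Fintype.ofFinite _
  have hcard : Fintype.card (GaloisField 2 n) = 2 ^ n := by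
    rw [← Nat.card_eq_fintype_card, GaloisField.card 2 n (by lia)]
  have hpow : 2 ^ 2 ≤ 2 ^ n := Nat.pow_le_pow_right (by norm_num) hn
  have hinv : ∀ x, h₁ x = x⁻¹ := by
    intro x
    rw [hh₁]
    rcases eq_or_ne x 0 with rfl | hx
    · rw [inv_zero, zero_pow (by lia)]
    · refine eq_inv_of_mul_eq_one_left ?_
      rw [← pow_succ, show 2 ^ n - 2 + 1 = Fintype.card (GaloisField 2 n) - 1 by lia]
      exact FiniteField.pow_card_sub_one_eq_one x hx
  have hcompl : ∀ (L : GaloisField 2 n →ₗ[ZMod 2] GaloisField 2 n) (c : GaloisField 2 n),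
      #{x | x⁻¹ = L x + c} + {x | h₁ x ≠ L x + c}.ncard = 2 ^ n := by
    intro L c
    rw [← hcard, Set.ncard_eq_toFinset_card']
    simp only [hinv, Set.toFinset_ofPred]
    exact card_filter_add_card_filter_not _
  constructor
  · obtain ⟨L, c, hd⟩ := Nat.sInf_mem (s := { d : ℕ | ∃ (L : GaloisField 2 n →ₗ[ZMod 2]
      GaloisField 2 n) (c : GaloisField 2 n), d = {x | h₁ x ≠ L x + c}.ncard }) ⟨_, 0, 0, rfl⟩
    change dA h₁ = _ at hd
    have hc := hcompl L c
    rw [← hd] at hc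
    set S : Finset (GaloisField 2 n) := {x | x⁻¹ = L x + c}
    have hT := card_mul_card_sub_one_le_of_inv_eq_affine L.toAddMonoidHom c (S.erase 0)
      (fun x hx ↦ ne_of_mem_erase hx) (fun x hx ↦ (mem_filter.mp (mem_of_mem_erase hx)).2)
    have hST : #S ≤ #(S.erase 0) + 1 := by
      have := pred_card_le_card_erase (s := S) (a := 0)
      lia
    rw [hcard] at hT
    set t := #(S.erase 0)
    have hTr : (t : ℝ) * (t - 1) ≤ 2 * (2 ^ n - 1) := by
      rcases Nat.eq_zero_or_pos t with h0 | hpos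
      · have : (1 : ℝ) ≤ 2 ^ n := one_le_pow₀ (by norm_num)
        simp only [h0, Nat.cast_zero, zero_mul]
        linarith
      · have := (Nat.cast_le (α := ℝ)).mpr hT
        rw [Nat.cast_mul, Nat.cast_mul, Nat.cast_pred hpos, Nat.cast_pred (by positivity)] at this
        exact_mod_cast this
    have hsqrt : (t : ℝ) - 1 / 2 ≤ Real.sqrt (2 ^ (n + 1)) := by
      refine Real.le_sqrt_of_sq_le ?_
      rw [pow_succ (2 : ℝ) n]
      nlinarith
    have hc' : (#S : ℝ) + dA h₁ = 2 ^ n := by exact_mod_cast hc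
    have hST' : (#S : ℝ) ≤ t + 1 := by exact_mod_cast hST
    linarith
  · obtain ⟨m, rfl⟩ := hne
    have hm : (m + m) / 2 = m := by lia
    rw [hm]
    let L : GaloisField 2 (m + m) →ₗ[ZMod 2] GaloisField 2 (m + m) :=
      (iterateFrobenius (GaloisField 2 (m + m)) 2 m).toAddMonoidHom.toZModLinearMap 2
    have hL : ∀ x, L x = x ^ 2 ^ m := fun x ↦ iterateFrobenius_def 2 m x
    have hle : dA h₁ ≤ {x | h₁ x ≠ L x + 0}.ncard := Nat.sInf_le ⟨L, 0, rfl⟩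
    have hc := hcompl L 0
    have hq := card_filter_pow_succ_eq_one (F := GaloisField 2 (m + m)) (q := 2 ^ m)
      (by rw [hcard]; ring)
    have hsub : insert 0 ({x : GaloisField 2 (m + m) | x ^ (2 ^ m + 1) = 1} : Finset _) ⊆
        ({x | x⁻¹ = L x + 0} : Finset (GaloisField 2 (m + m))) := by
      intro x hx
      rw [mem_filter_univ, add_zero, hL]
      rcases mem_insert.mp hx with rfl | hx
      · simp
      · rw [mem_filter_univ, pow_succ] at hx
        exact (eq_inv_of_mul_eq_one_left hx).symm
    have hcard_le := card_le_card hsub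
    rw [card_insert_of_notMem (by simp), hq] at hcard_le
    have : (dA h₁ : ℝ) + 2 ^ m + 2 ≤ 2 ^ (m + m) := by
      exact_mod_cast (by lia : dA h₁ + 2 ^ m + 2 ≤ 2 ^ (m + m))
    linarith
end

section
/- Let n ≥ 4 be an integer divisible by 4, F = GaloisField 2 n, d = 2^(n/2 − 1) + 1, and h₂ : F → F the Gold-type power function h₂(x) = x^d. Then, as real numbers, 2^n − √(2^(n+1)) − 1/2 ≤ dA(h₂), and dA(h₂) ≤ 2^n − 2^(n/2) − 2. (In particular dA(h₂) ≤ 2^n − 2^(n/2) − 1, the Liu–Mesnager–Chen bound.) -/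
/-- An element `t` with `t ^ 4 = t` is fixed by every power of the fourth power map. -/
lemma pow_four_pow_eq_self {M : Type*} [Monoid M] {t : M} (ht : t ^ 4 = t) (j : ℕ) :
    t ^ 4 ^ j = t := by
  induction j with
  | zero => simp
  | succ j ih => rw [pow_succ, pow_mul, ih, ht]

/-- The power map with exponent `4 ^ j + 2` is almost perfect nonlinear on the field with
`4 ^ j * 4 ^ j` elements: it has no nontrivial additive coincidence on a nontrivial additive
quadruple. -/
lemma eq_or_eq_of_add_eq_add_of_pow_add_eq {F : Type*} [Field F] [CharP F 2] [Finite F] {j : ℕ}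
    (hF : Nat.card F = 4 ^ j * 4 ^ j) {x y z w : F} (hxy : x ≠ y) (hadd : x + y = z + w)
    (hpow : x ^ (4 ^ j + 2) + y ^ (4 ^ j + 2) = z ^ (4 ^ j + 2) + w ^ (4 ^ j + 2)) :
    z = x ∨ z = y := by
  have h2 : (2 : F) = 0 := CharTwo.two_eq_zero
  have hq (u v : F) : (u + v) ^ 4 ^ j = u ^ 4 ^ j + v ^ 4 ^ j := by
    have h := add_pow_char_pow u v 2 (2 * j)
    rwa [pow_mul 2 2 j] at h
  obtain ⟨a, rfl⟩ : ∃ a, y = x + a := ⟨y - x, by ring⟩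
  obtain ⟨b, rfl⟩ : ∃ b, z = x + b := ⟨z - x, by ring⟩
  have ha : a ≠ 0 := by rintro rfl; simp at hxy
  obtain rfl : w = x + a + b := by linear_combination -hadd - b * h2
  have hab : b ^ 4 ^ j * a ^ 2 = a ^ 4 ^ j * b ^ 2 := by
    simp only [pow_add, hq, CharTwo.add_sq] at hpow
    grind
  have ht : (b / a) ^ 4 ^ j = (b / a) ^ 2 := by
    rw [div_pow, div_pow, div_eq_div_iff (pow_ne_zero _ ha) (pow_ne_zero _ ha), hab, mul_comm]
  have ht4 : (b / a) ^ 4 = b / a := by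
    have := Fintype.ofFinite F
    have h := FiniteField.pow_card (b / a)
    rwa [← Nat.card_eq_fintype_card, hF, pow_mul, ht, ← pow_mul, mul_comm 2, pow_mul, ht,
      ← pow_mul] at h
  rw [pow_four_pow_eq_self ht4] at ht
  have : b / a = 0 ∨ b / a = 1 := by
    have h : b / a * (b / a - 1) = 0 := by linear_combination -ht
    rcases mul_eq_zero.1 h with h | h
    · exact Or.inl h
    · exact Or.inr (sub_eq_zero.1 h)
  rcases this with h | h
  · left
    simpa [ha] using h
  · right
    rw [(div_eq_one_iff_eq ha).1 h]

/-- A Sidon set in a finite group of exponent two has at most `2 * |G| - 2` ordered pairs of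
distinct elements. -/
lemma card_mul_card_le_of_sidon {G : Type*} [AddCommGroup G] [Fintype G] [DecidableEq G]
    (hG : ∀ x : G, x + x = 0) (S : Finset G)
    (hS : ∀ x ∈ S, ∀ y ∈ S, ∀ z ∈ S, ∀ w ∈ S, x ≠ y → x + y = z + w → z = x ∨ z = y) :
    S.card * S.card + 2 ≤ 2 * Fintype.card G + S.card := by
  have hmaps : ∀ p ∈ S.offDiag, p.1 + p.2 ∈ Finset.univ.erase (0 : G) := by
    rintro ⟨x, y⟩ hp
    simp only [Finset.mem_offDiag] at hp
    simp only [Finset.mem_erase, Finset.mem_univ, and_true]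
    intro h
    exact hp.2.2 (add_right_cancel (h.trans (hG y).symm))
  have hfiber : ∀ b ∈ Finset.univ.erase (0 : G),
      (S.offDiag.filter fun p => p.1 + p.2 = b).card ≤ 2 := by
    intro b _
    rcases (S.offDiag.filter fun p => p.1 + p.2 = b).eq_empty_or_nonempty with h | ⟨⟨x, y⟩, hxy⟩
    · simp [h]
    · refine (Finset.card_le_card (t := {(x, y), (y, x)}) ?_).trans Finset.card_le_two
      rintro ⟨z, w⟩ hzw
      simp only [Finset.mem_filter, Finset.mem_offDiag] at hxy hzw
      obtain ⟨⟨hx, hy, hne⟩, rfl⟩ := hxy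
      obtain ⟨⟨hz, hw, -⟩, hsum⟩ := hzw
      rcases hS x hx y hy z hz w hw hne hsum.symm with rfl | rfl
      · simp [add_left_cancel hsum]
      · rw [add_comm x] at hsum
        simp [add_left_cancel hsum]
  have h := Finset.card_le_mul_card_image_of_maps_to hmaps 2 hfiber
  rw [Finset.offDiag_card, Finset.card_erase_of_mem (Finset.mem_univ _), Finset.card_univ] at h
  have : 0 < Fintype.card G := Fintype.card_pos_iff.2 ⟨0⟩
  omega

/-- In a field with `q * q` elements, at least `q + 2` elements satisfy `x ^ (q + 2) = x`. -/
lemma add_two_le_ncard_pow_add_two_eq_self {F : Type*} [Field F] [Finite F] {q : ℕ}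
    (hF : Nat.card F = q * q) : q + 2 ≤ {x : F | x ^ (q + 2) = x}.ncard := by
  have hker : Nat.card (powMonoidHom (q + 1) : Fˣ →* Fˣ).ker = q + 1 := by
    rw [IsCyclic.card_powMonoidHom_ker, Nat.card_units, hF, show q * q - 1 = (q + 1) * (q - 1) from Nat.mul_self_sub_mul_self_eq q 1]
    exact Nat.gcd_eq_right (dvd_mul_right _ _)
  have hinj : Function.Injective (fun u : Fˣ => (u : F)) := Units.val_injective
  set T : Set F := (fun u : Fˣ => (u : F)) '' ((powMonoidHom (q + 1) : Fˣ →* Fˣ).ker : Set Fˣ)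
  have hT : T.ncard = q + 1 := by
    rw [Set.ncard_image_of_injective _ hinj]
    exact hker
  have h0 : (0 : F) ∉ T := by
    rintro ⟨u, -, hu⟩
    exact u.ne_zero hu
  have hinsert : (insert 0 T).ncard = q + 2 := by rw [Set.ncard_insert_of_notMem h0, hT]
  refine hinsert.ge.trans (Set.ncard_le_ncard ?_)
  rintro x (rfl | ⟨u, hu, rfl⟩)
  · simp
  · have hu' : u ^ (q + 1) = 1 := hu
    have : (u : F) ^ (q + 1) = 1 := by
      rw [← Units.val_pow_eq_pow_val, hu', Units.val_one]
    change (u : F) ^ (q + 1 + 1) = u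
    rw [pow_succ, this, one_mul]

theorem dist_to_affine_of_gold_function
    (n : ℕ) (hn : 4 ≤ n) (hn4 : 4 ∣ n)
    (d : ℕ) (hd : d = 2 ^ (n / 2 - 1) + 1)
    (h₂ : GaloisField 2 n → GaloisField 2 n)
    (hh₂ : ∀ x, h₂ x = x ^ d) :
    (2 : ℝ) ^ n - Real.sqrt (2 ^ (n + 1)) - 1 / 2 ≤ (dA h₂ : ℝ) ∧
      (dA h₂ : ℝ) ≤ 2 ^ n - 2 ^ (n / 2) - 2 := by
  classical
  have := Fintype.ofFinite (GaloisField 2 n)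
  obtain ⟨j, rfl⟩ := hn4
  have hhalf : 4 * j / 2 = 2 * j := by omega
  have hcard : Nat.card (GaloisField 2 (4 * j)) = 2 ^ (4 * j) := GaloisField.card 2 _ (by omega)
  have hq : (2 : ℕ) ^ (4 * j) = 4 ^ j * 4 ^ j := by
    rw [← mul_pow, pow_mul]
    norm_num
  have hsq (x : GaloisField 2 (4 * j)) : h₂ x ^ 2 = x ^ (4 ^ j + 2) := by
    have hexp : d * 2 = 4 ^ j + 2 := by
      rw [hd, hhalf, add_mul, ← pow_succ, Nat.sub_add_cancel (by omega), pow_mul]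
      norm_num
    rw [hh₂, ← pow_mul, hexp]
  have hcompl (L : GaloisField 2 (4 * j) →ₗ[ZMod 2] GaloisField 2 (4 * j))
      (c : GaloisField 2 (4 * j)) :
      {x | h₂ x = L x + c}.ncard + {x | h₂ x ≠ L x + c}.ncard = 2 ^ (4 * j) := by
    rw [← hcard]
    exact Set.ncard_add_ncard_compl {x | h₂ x = L x + c}
  constructor
  · obtain ⟨L, c, hLc⟩ : dA h₂ ∈ { d : ℕ | ∃ (L : GaloisField 2 (4 * j) →ₗ[ZMod 2]
        GaloisField 2 (4 * j)) (c : GaloisField 2 (4 * j)), d = {x | h₂ x ≠ L x + c}.ncard } :=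
      Nat.sInf_mem ⟨_, 0, 0, rfl⟩
    have hsum := hcompl L c
    rw [← hLc] at hsum
    have hsidon := card_mul_card_le_of_sidon (CharTwo.add_self_eq_zero (R := GaloisField 2 (4 * j)))
      (Finset.univ.filter fun x => h₂ x = L x + c) <| by
        intro x hx y hy z hz w hw hxy hadd
        simp only [Finset.mem_filter, Finset.mem_univ, true_and] at hx hy hz hw
        refine eq_or_eq_of_add_eq_add_of_pow_add_eq (hcard.trans hq) hxy hadd ?_
        rw [← hsq, ← hsq, ← hsq, ← hsq, ← CharTwo.add_sq, ← CharTwo.add_sq, hx, hy, hz, hw]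
        have := congrArg L hadd
        rw [map_add, map_add] at this
        congr 1
        linear_combination this
    rw [← Nat.card_eq_fintype_card, hcard, ← Set.ncard_coe_finset] at hsidon
    simp only [Finset.coe_filter, Finset.mem_univ, true_and] at hsidon
    set s := {x | h₂ x = L x + c}.ncard
    have hsumR : (s : ℝ) + dA h₂ = 2 ^ (4 * j) := by exact_mod_cast hsum
    have hsidonR : (s : ℝ) * s + 2 ≤ 2 * 2 ^ (4 * j) + s := by exact_mod_cast hsidon
    have : (s : ℝ) - 1 / 2 ≤ Real.sqrt (2 ^ (4 * j + 1)) := by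
      apply Real.le_sqrt_of_sq_le
      rw [pow_succ 2 (4 * j)]
      nlinarith
    linarith
  · let L : GaloisField 2 (4 * j) →ₗ[ZMod 2] GaloisField 2 (4 * j) :=
      ((frobeniusEquiv (GaloisField 2 (4 * j)) 2).symm : _ →+ _).toZModLinearMap 2
    have hle : dA h₂ ≤ {x | h₂ x ≠ L x + 0}.ncard := Nat.sInf_le ⟨L, 0, rfl⟩
    have hagree : {x | h₂ x = L x + 0} = {x | x ^ (4 ^ j + 2) = x} := by
      ext x
      have hL : L x ^ 2 = x := frobeniusEquiv_symm_pow_p (GaloisField 2 (4 * j)) 2 x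
      simp only [add_zero, Set.mem_ofPred_eq]
      rw [← CharTwo.sq_inj, hsq, hL]
    have hsum := hcompl L 0
    have hmany := add_two_le_ncard_pow_add_two_eq_self (hcard.trans hq)
    rw [hagree] at hsum
    have hbound : dA h₂ + 4 ^ j + 2 ≤ 2 ^ (4 * j) := by omega
    have hboundR : (dA h₂ : ℝ) + 4 ^ j + 2 ≤ 2 ^ (4 * j) := by exact_mod_cast hbound
    rw [hhalf, pow_mul 2 2 j]
    norm_num
    linarith
end

section
/- Let n, m be positive integers, V = (Fin n → ZMod 2), W = (Fin m → ZMod 2), and f : V → W. For a ∈ V, v ∈ W define the Walsh transform W_f(a,v) = ∑_{x ∈ V} χ(v·f(x) + a·x) ∈ ℤ, where χ : ZMod 2 → ℤ sends 0 ↦ 1 and 1 ↦ −1, and u·w = ∑ᵢ uᵢwᵢ is the inner product. Then the integer 2^m · (2^n − dA(f)) is the greatest element of the set { ∑_{v ∈ W} χ(v·b) · W_f(L(v), v) : b ∈ W, L : W →ₗ[ZMod 2] V }; i.e. dA(f) = 2^n − 2^(−m) · max over b ∈ W and 𝔽₂-linear maps L : W → V of ∑_{v ∈ W} χ(v·b)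 W_f(L(v), v). -/
/-- The sign character of ZMod 2: chi 0 = 1, chi 1 = -1. -/
def chi (x : ZMod 2) : ℤ := if x = 0 then 1 else -1

theorem chi_add (a b : ZMod 2) : chi (a + b) = chi a * chi b := by
  revert a b
  decide

/-- Orthogonality of the characters `v ↦ chi (v ⬝ᵥ w)`. -/
theorem sum_chi_dotProduct {ι : Type*} [Fintype ι] [DecidableEq ι] (w : ι → ZMod 2) :
    ∑ v : ι → ZMod 2, chi (v ⬝ᵥ w) = if w = 0 then 2 ^ Fintype.card ι else 0 := by
  split_ifs with hw
  · simp [hw, chi, ZMod.card]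
  · obtain ⟨i, hi⟩ := Function.ne_iff.mp hw
    have hi_chi : chi (w i) = -1 := if_neg hi
    have h_shift := Equiv.sum_comp (Equiv.addRight (Pi.single i 1 : ι → ZMod 2))
      (fun v => chi (v ⬝ᵥ w))
    simp only [Equiv.coe_addRight, add_dotProduct, single_one_dotProduct, chi_add, hi_chi,
      ← Finset.sum_mul] at h_shift
    linarith

/-- The character sum attached to `b` and a matrix `M` counts the agreements of `f` with the
affine map `x ↦ Mᵀ x + b`. -/
theorem sum_chi_mul_walsh_eq {n m : ℕ} (f : (Fin n → ZMod 2) → (Fin m → ZMod 2))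
    (b : Fin m → ZMod 2) (M : Matrix (Fin n) (Fin m) (ZMod 2)) :
    ∑ v : Fin m → ZMod 2, chi (∑ i, v i * b i) *
        ∑ x : Fin n → ZMod 2, chi ((∑ i, v i * f x i) + ∑ i, Matrix.toLin' M v i * x i) =
      (2 : ℤ) ^ m * ((2 : ℤ) ^ n - ({x | f x ≠ Matrix.toLin' M.transpose x + b}.ncard : ℤ)) := by
  have h_term (v : Fin m → ZMod 2) (x : Fin n → ZMod 2) :
      chi (∑ i, v i * b i) * chi ((∑ i, v i * f x i) + ∑ i, Matrix.toLin' M v i * x i) =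
        chi (v ⬝ᵥ (f x - (Matrix.toLin' M.transpose x + b))) := by
    have h_adj : ∑ i, Matrix.toLin' M v i * x i = v ⬝ᵥ Matrix.toLin' M.transpose x := by
      rw [Matrix.toLin'_apply, Matrix.toLin'_apply, Matrix.dotProduct_mulVec,
        Matrix.vecMul_transpose]
      rfl
    rw [h_adj, ← chi_add, ZModModule.sub_eq_add, dotProduct_add, dotProduct_add]
    congr 1
    simp only [dotProduct]
    ring
  have h_compl := Set.ncard_add_ncard_compl {x | f x ≠ Matrix.toLin' M.transpose x + b}
  have h_agree : {x | f x ≠ Matrix.toLin' M.transpose x + b}ᶜ.ncard =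
      (Finset.univ.filter fun x => f x = Matrix.toLin' M.transpose x + b).card := by
    rw [← Set.ncard_coe_finset]
    congr 1
    ext x
    rw [Finset.mem_coe, Finset.mem_filter]
    simp
  have h_card : Nat.card (Fin n → ZMod 2) = 2 ^ n := by simp
  rw [h_agree, h_card] at h_compl
  have h_compl_int : (({x | f x ≠ Matrix.toLin' M.transpose x + b}.ncard : ℕ) : ℤ) +
      (Finset.univ.filter fun x => f x = Matrix.toLin' M.transpose x + b).card = 2 ^ n := by
    exact_mod_cast h_compl
  simp only [Finset.mul_sum, h_term]
  rw [Finset.sum_comm]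
  simp only [sum_chi_dotProduct, sub_eq_zero, Fintype.card_fin]
  rw [← Finset.sum_filter, Finset.sum_const, nsmul_eq_mul, ← h_compl_int]
  ring

theorem dist_to_affine_walsh_formula
    (n m : ℕ) (hn : 0 < n) (hm : 0 < m)
    (f : (Fin n → ZMod 2) → (Fin m → ZMod 2)) :
    IsGreatest
      { z : ℤ | ∃ (b : Fin m → ZMod 2)
          (L : (Fin m → ZMod 2) →ₗ[ZMod 2] (Fin n → ZMod 2)),
          z = ∑ v : Fin m → ZMod 2, chi (∑ i, v i * b i) *
                ∑ x : Fin n → ZMod 2, chi ((∑ i, v i * f x i) + ∑ i, L v i * x i) }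
      ((2 : ℤ) ^ m * ((2 : ℤ) ^ n - (dA f : ℤ))) := by
  constructor
  · obtain ⟨A, c, h⟩ := Nat.sInf_mem
      (s := {d : ℕ | ∃ (A : (Fin n → ZMod 2) →ₗ[ZMod 2] (Fin m → ZMod 2)) (c : Fin m → ZMod 2),
        d = {x | f x ≠ A x + c}.ncard}) ⟨_, 0, 0, rfl⟩
    refine ⟨c, Matrix.toLin' (LinearMap.toMatrix' A).transpose, ?_⟩
    rw [sum_chi_mul_walsh_eq, Matrix.transpose_transpose, Matrix.toLin'_toMatrix', ← h]
    rfl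
  · rintro _ ⟨b, L, rfl⟩
    have h_sum := sum_chi_mul_walsh_eq f b (LinearMap.toMatrix' L)
    rw [Matrix.toLin'_toMatrix'] at h_sum
    rw [h_sum]
    have h_le : dA f ≤
        {x | f x ≠ Matrix.toLin' (LinearMap.toMatrix' L).transpose x + b}.ncard :=
      Nat.sInf_le ⟨_, _, rfl⟩
    gcongr
end

section
/- Let n be a positive integer and S a Sidon set in the 𝔽₂-vector space V = (Fin n → ZMod 2). Then, as real numbers, |S| ≤ √(2^(n+1)) + 1/2 (i.e. |S| ≤ √2 · 2^(n/2) + 1/2). -/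
/-- A four-element list with at most two distinct values, the first two being distinct, takes all
its values among the first two. -/
lemma eq_or_eq_of_ncard_le_two {α : Type*} {x y z w : α} (hxy : x ≠ y)
    (h : ({x, y, z, w} : Set α).ncard ≤ 2) : (z = x ∨ z = y) ∧ (w = x ∨ w = y) := by
  have hsub : ({x, y} : Set α) ⊆ {x, y, z, w} := by
    intro a ha
    simp only [Set.mem_insert_iff, Set.mem_singleton_iff] at ha ⊢
    tauto
  have heq : ({x, y} : Set α) = {x, y, z, w} :=
    Set.eq_of_subset_of_ncard_le hsub (by rwa [Set.ncard_pair hxy])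
  have hz : z ∈ ({x, y} : Set α) := by rw [heq]; simp
  have hw : w ∈ ({x, y} : Set α) := by rw [heq]; simp
  exact ⟨by simpa using hz, by simpa using hw⟩

/-- The ordered pairs of distinct elements of a Sidon set map at most two-to-one, by addition,
to the nonzero vectors. -/
lemma sidon_card_mul_pred_le {V : Type*} [AddCommGroup V] [Module (ZMod 2) V] [Fintype V]
    [DecidableEq V] (T : Finset V)
    (hT : ∀ x ∈ T, ∀ y ∈ T, ∀ z ∈ T, ∀ w ∈ T, x + y = z + w →
      ({x, y, z, w} : Set V).ncard ≤ 2) :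
    T.card * T.card - T.card ≤ 2 * (Fintype.card V - 1) := by
  have hmaps : ∀ p ∈ T.offDiag, p.1 + p.2 ∈ Finset.univ.erase (0 : V) := by
    intro p hp
    have hne := (Finset.mem_offDiag.mp hp).2.2
    refine Finset.mem_erase.mpr ⟨fun h => hne ?_, Finset.mem_univ _⟩
    rw [eq_neg_of_add_eq_zero_left h, ZModModule.neg_eq_self]
  have hfiber : ∀ v ∈ Finset.univ.erase (0 : V),
      (T.offDiag.filter fun p => p.1 + p.2 = v).card ≤ 2 := by
    intro v _
    rcases (T.offDiag.filter fun p => p.1 + p.2 = v).eq_empty_or_nonempty with h | ⟨⟨x, y⟩, h⟩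
    · simp [h]
    · simp only [Finset.mem_filter, Finset.mem_offDiag] at h
      obtain ⟨⟨hx, hy, hxy⟩, hv⟩ := h
      refine (Finset.card_le_card (t := {(x, y), (y, x)}) ?_).trans Finset.card_le_two
      rintro ⟨z, w⟩ h
      simp only [Finset.mem_filter, Finset.mem_offDiag] at h
      obtain ⟨⟨hz, hw, hzw⟩, hv'⟩ := h
      have := eq_or_eq_of_ncard_le_two hxy (hT x hx y hy z hz w hw (hv.trans hv'.symm))
      simp only [Finset.mem_insert, Finset.mem_singleton, Prod.mk.injEq]
      grind
  have := Finset.card_le_mul_card_image_of_maps_to hmaps 2 hfiber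
  rwa [Finset.offDiag_card, Finset.card_erase_of_mem (Finset.mem_univ _),
    Finset.card_univ] at this

theorem sidon_set_obvious_upper_bound
    (n : ℕ) (hn : 0 < n) (S : Set (Fin n → ZMod 2))
    (hS : ∀ x ∈ S, ∀ y ∈ S, ∀ z ∈ S, ∀ w ∈ S, x + y = z + w →
      ({x, y, z, w} : Set (Fin n → ZMod 2)).ncard ≤ 2) :
    (S.ncard : ℝ) ≤ Real.sqrt (2 ^ (n + 1)) + 1 / 2 := by
  classical
  have hcard := sidon_card_mul_pred_le S.toFinset (by simpa using hS)
  rw [← Set.ncard_eq_toFinset_card'] at hcard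
  have hV : Fintype.card (Fin n → ZMod 2) = 2 ^ n := by simp [ZMod.card]
  rw [hV] at hcard
  have hnat : S.ncard * S.ncard + 2 ≤ 2 * 2 ^ n + S.ncard := by
    have := Nat.one_le_two_pow (n := n)
    omega
  have hreal : (S.ncard : ℝ) * S.ncard + 2 ≤ 2 * 2 ^ n + S.ncard := by exact_mod_cast hnat
  have : (S.ncard : ℝ) - 1 / 2 ≤ Real.sqrt (2 ^ (n + 1)) := by
    apply Real.le_sqrt_of_sq_le
    rw [pow_succ (2 : ℝ) n]
    nlinarith
  linarith
end

section
/- Let n be a positive integer, F = GaloisField 2 n, and f : F → F. Then f is APN if and only if the graph G_f = {(x, f(x)) : x ∈ F} is a Sidon set in the 𝔽₂-vector space F × F. -/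
theorem apn_iff_graph_sidon
    (n : ℕ) (hn : 0 < n) (f : GaloisField 2 n → GaloisField 2 n) :
    (∀ a : GaloisField 2 n, a ≠ 0 → ∀ b : GaloisField 2 n,
        {x : GaloisField 2 n | f (x + a) + f x = b}.ncard ≤ 2) ↔
      (∀ p ∈ Set.range (fun x : GaloisField 2 n => (x, f x)),
       ∀ q ∈ Set.range (fun x : GaloisField 2 n => (x, f x)),
       ∀ r ∈ Set.range (fun x : GaloisField 2 n => (x, f x)),
       ∀ s ∈ Set.range (fun x : GaloisField 2 n => (x, f x)),
        p + q = r + s →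
          ({p, q, r, s} : Set (GaloisField 2 n × GaloisField 2 n)).ncard ≤ 2) := by
  have ncard_pair_le {α : Type} (x y : α) : ({x, y} : Set α).ncard ≤ 2 :=
    (Set.ncard_insert_le x {y}).trans (by simp)
  constructor
  · rintro hf _ ⟨x, rfl⟩ _ ⟨y, rfl⟩ _ ⟨z, rfl⟩ _ ⟨w, rfl⟩ h
    obtain ⟨h₁, h₂⟩ : x + y = z + w ∧ f x + f y = f z + f w := by simpa using h
    by_cases hxy : x = y
    · subst hxy
      have hzw : z = w := by
        rwa [CharTwo.add_self_eq_zero, eq_comm, CharTwo.add_eq_zero] at h₁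
      subst hzw
      simpa using ncard_pair_le (x, f x) (z, f z)
    · have hsub : ({x, y, z, w} : Set (GaloisField 2 n)) ⊆
          {u | f (u + (x + y)) + f u = f x + f y} := by
        rintro u (rfl | rfl | rfl | rfl)
        · simp [CharTwo.add_cancel_left, add_comm (f y)]
        · simp [add_comm x, CharTwo.add_cancel_left]
        · simp [h₁, h₂, CharTwo.add_cancel_left, add_comm (f w)]
        · simp [h₁, h₂, add_comm z, CharTwo.add_cancel_left]
      have hcard := (Set.ncard_le_ncard hsub (Set.toFinite _)).trans
        (hf (x + y) (by rwa [Ne, CharTwo.add_eq_zero]) (f x + f y))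
      simpa [Set.image_insert_eq] using
        (Set.ncard_image_le (f := fun u => (u, f u))
          (Set.toFinite ({x, y, z, w} : Set (GaloisField 2 n)))).trans hcard
  · intro hS a ha b
    rcases Set.eq_empty_or_nonempty {x | f (x + a) + f x = b} with he | ⟨x, hx⟩
    · simp [he]
    · refine (Set.ncard_le_ncard ?_ (Set.toFinite {x, x + a})).trans (ncard_pair_le _ _)
      intro y hy
      by_contra hne
      obtain ⟨hyx, hya⟩ : y ≠ x ∧ y ≠ x + a := by simpa using hne
      have hle := hS _ ⟨x, rfl⟩ _ ⟨x + a, rfl⟩ _ ⟨y, rfl⟩ _ ⟨y + a, rfl⟩ (by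
        have hfxy : f x + f (x + a) = f y + f (y + a) := by
          rw [add_comm, hx.trans hy.symm, add_comm]
        simp [hfxy, ← add_assoc, CharTwo.add_self_eq_zero])
      refine absurd hle (not_le.mpr ((Set.two_lt_ncard_iff (Set.toFinite _)).mpr
        ⟨(x, f x), (x + a, f (x + a)), (y, f y), by simp, by simp, by simp, ?_, ?_, ?_⟩))
      · simp [ha]
      · simp [hyx.symm]
      · simp [hya.symm]
end

section
/- Let n be a positive integer, F = GaloisField 2 n, f : F → F an APN function, and A : F → F an affine map. Then, as real numbers, |{x ∈ F : f(x) = A(x)}| ≤ √(2^(n+1)) + 1/2. -/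
/-- In a finite group, if every nonzero element has at most `m` representations as a difference
of two elements of `S`, then `#S * #S - #S ≤ m * (#G - 1)`. -/
theorem card_mul_card_sub_card_le_of_card_differences_le {G : Type*} [AddCommGroup G] [Fintype G]
    [DecidableEq G] (S : Finset G) (m : ℕ)
    (hS : ∀ a : G, a ≠ 0 → (S.filter fun x => x + a ∈ S).card ≤ m) :
    S.card * S.card - S.card ≤ m * (Fintype.card G - 1) := by
  rw [← Finset.offDiag_card, ← Finset.card_univ, ← Finset.card_erase_of_mem (Finset.mem_univ 0)]
  refine Finset.card_le_mul_card_image_of_maps_to (f := fun p : G × G => p.2 - p.1) ?_ m ?_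
  · rintro ⟨x, y⟩ h
    simp only [Finset.mem_offDiag] at h
    simpa [sub_eq_zero] using h.2.2.symm
  · intro a ha
    refine le_trans (Finset.card_le_card_of_injOn Prod.fst ?_ ?_) (hS a (Finset.ne_of_mem_erase ha))
    · rintro ⟨x, y⟩ h
      simp only [Finset.mem_coe, Finset.mem_filter, Finset.mem_offDiag] at h ⊢
      obtain ⟨⟨hx, hy, -⟩, rfl⟩ := h
      exact ⟨hx, by simpa using hy⟩
    · rintro ⟨x, y⟩ h ⟨x', y'⟩ h' hxx
      simp only [Finset.mem_coe, Finset.mem_filter] at h h' hxx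
      subst hxx
      exact Prod.ext rfl (sub_left_injective (h.2.trans h'.2.symm))

theorem apn_affine_agreement_bound
    (n : ℕ) (hn : 0 < n) (f A : GaloisField 2 n → GaloisField 2 n)
    (hAPN : ∀ a : GaloisField 2 n, a ≠ 0 → ∀ b : GaloisField 2 n,
      {x : GaloisField 2 n | f (x + a) + f x = b}.ncard ≤ 2)
    (L : GaloisField 2 n →ₗ[ZMod 2] GaloisField 2 n) (c : GaloisField 2 n)
    (hA : ∀ x, A x = L x + c) :
    ({x : GaloisField 2 n | f x = A x}.ncard : ℝ) ≤ Real.sqrt (2 ^ (n + 1)) + 1 / 2 := by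
  classical
  have : Fintype (GaloisField 2 n) := Fintype.ofFinite _
  have hcard : Fintype.card (GaloisField 2 n) = 2 ^ n := by
    rw [← Nat.card_eq_fintype_card, GaloisField.card 2 n hn.ne']
  let S : Finset (GaloisField 2 n) := Finset.univ.filter fun x => f x = A x
  have hncard : {x : GaloisField 2 n | f x = A x}.ncard = S.card := by
    rw [← Set.ncard_coe_finset]
    simp [S]
  have hbound : S.card * S.card - S.card ≤ 2 * (2 ^ n - 1) := by
    rw [← hcard]
    refine card_mul_card_sub_card_le_of_card_differences_le S 2 fun a ha => ?_
    rw [← Set.ncard_coe_finset]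
    refine le_trans (Set.ncard_le_ncard ?_ (Set.toFinite _)) (hAPN a ha (L a))
    intro x hx
    simp only [S, Finset.coe_filter, Finset.mem_filter, Finset.mem_univ, true_and,
      Set.mem_ofPred_eq] at hx ⊢
    rw [hx.1, hx.2, hA, hA, map_add]
    linear_combination CharTwo.add_self_eq_zero (L x) + CharTwo.add_self_eq_zero c
  have hreal : (S.card : ℝ) * S.card + 2 ≤ 2 ^ (n + 1) + S.card := by
    have : S.card * S.card + 2 ≤ 2 ^ (n + 1) + S.card := by
      have hpos : 0 < 2 ^ n := by positivity
      rw [pow_succ]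
      omega
    exact_mod_cast this
  rw [hncard, ← sub_le_iff_le_add]
  apply Real.le_sqrt_of_sq_le
  nlinarith
end

section
/- Let n ≥ 2 be an even integer, F = GaloisField 2 n, f : F → F the Field Inverse Function f(x) = x^(2^n − 2), and A : F → F an affine map. Then, as real numbers, |{x ∈ F : f(x) = A(x)}| ≤ √(2^(n+1)) + 3/2. -/
/-- In characteristic two, a pair of distinct nonzero elements is determined up to order by its sum
and the sum of its inverses. -/
theorem pair_eq_or_swap_of_add_eq_of_inv_add_eq {F : Type*} [Field F] [CharP F 2] {x y z w : F}
    (hx : x ≠ 0) (hy : y ≠ 0) (hz : z ≠ 0) (hw : w ≠ 0) (hxy : x ≠ y)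
    (hadd : z + w = x + y) (hinv : z⁻¹ + w⁻¹ = x⁻¹ + y⁻¹) :
    (z = x ∧ w = y) ∨ (z = y ∧ w = x) := by
  have hsum : x + y ≠ 0 := fun h => hxy (CharTwo.add_eq_zero.mp h)
  have hmul : x * y = z * w := by
    field_simp at hinv
    apply mul_left_cancel₀ hsum
    linear_combination hinv - x * y * hadd
  have hroot : (z - x) * (z - y) = 0 := by
    linear_combination hmul + z * hadd
  rcases mul_eq_zero.mp hroot with h | h
  · exact .inl ⟨by linear_combination h, by linear_combination hadd - h⟩
  · exact .inr ⟨by linear_combination h, by linear_combination hadd - h⟩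

/-- A set of nonzero elements of a finite field of characteristic two on which the inverse agrees
with an affine map is a Sidon set, so its ordered pairs of distinct elements number at most twice
the nonzero elements of the field. -/
theorem card_mul_pred_le_of_inv_eq_affine {F : Type*} [Field F] [Fintype F] [DecidableEq F]
    [CharP F 2] (L : F →+ F) (c : F) (T : Finset F) (h0 : ∀ x ∈ T, x ≠ 0)
    (hT : ∀ x ∈ T, x⁻¹ = L x + c) :
    T.card * T.card - T.card ≤ 2 * (Fintype.card F - 1) := by
  have hsum : ∀ x ∈ T, ∀ y ∈ T, x⁻¹ + y⁻¹ = L (x + y) := by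
    intro x hx y hy
    rw [hT x hx, hT y hy, map_add]
    linear_combination CharTwo.add_self_eq_zero c
  rw [← Finset.offDiag_card, ← Finset.card_univ, ← Finset.card_erase_of_mem (Finset.mem_univ 0)]
  refine Finset.card_le_mul_card_image_of_maps_to (f := fun p : F × F => p.1 + p.2) ?_ 2 ?_
  · rintro ⟨x, y⟩ hp
    have hne := (Finset.mem_offDiag.mp hp).2.2
    simpa [CharTwo.add_eq_zero] using hne
  · intro b _
    rcases (T.offDiag.filter fun p : F × F => p.1 + p.2 = b).eq_empty_or_nonempty with
      he | ⟨⟨x, y⟩, hp⟩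
    · simp [he]
    · refine (Finset.card_le_card (t := {(x, y), (y, x)}) ?_).trans Finset.card_le_two
      rintro ⟨z, w⟩ hq
      simp only [Finset.mem_filter, Finset.mem_offDiag] at hp hq
      obtain ⟨⟨hx, hy, hxy⟩, rfl⟩ := hp
      obtain ⟨⟨hz, hw, -⟩, hadd⟩ := hq
      have hinv : z⁻¹ + w⁻¹ = x⁻¹ + y⁻¹ := by rw [hsum z hz w hw, hsum x hx y hy, hadd]
      simpa using pair_eq_or_swap_of_add_eq_of_inv_add_eq (h0 x hx) (h0 y hy) (h0 z hz) (h0 w hw)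
        hxy hadd hinv

theorem inverse_function_affine_agreement_bound
    (n : ℕ) (hn : 2 ≤ n) (hne : Even n)
    (f A : GaloisField 2 n → GaloisField 2 n)
    (hf : ∀ x, f x = x ^ (2 ^ n - 2))
    (L : GaloisField 2 n →ₗ[ZMod 2] GaloisField 2 n) (c : GaloisField 2 n)
    (hA : ∀ x, A x = L x + c) :
    ({x : GaloisField 2 n | f x = A x}.ncard : ℝ) ≤ Real.sqrt (2 ^ (n + 1)) + 3 / 2 := by
  classical
  have : Fintype (GaloisField 2 n) := Fintype.ofFinite _
  have hcard : Fintype.card (GaloisField 2 n) = 2 ^ n := by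
    rw [← Nat.card_eq_fintype_card, GaloisField.card 2 n (by omega)]
  have hpow : 2 ^ 2 ≤ 2 ^ n := Nat.pow_le_pow_right (by norm_num) hn
  have hf_inv : ∀ x ≠ 0, f x = x⁻¹ := by
    intro x hx
    refine eq_inv_of_mul_eq_one_left ?_
    rw [hf, ← pow_succ,
      show 2 ^ n - 2 + 1 = Fintype.card (GaloisField 2 n) - 1 by omega]
    exact FiniteField.pow_card_sub_one_eq_one x hx
  set S : Finset (GaloisField 2 n) := Finset.univ.filter fun x => f x = A x with hS
  have hncard : {x : GaloisField 2 n | f x = A x}.ncard = S.card := by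
    rw [← Set.ncard_coe_finset]
    simp [hS]
  have hbound := card_mul_pred_le_of_inv_eq_affine L.toAddMonoidHom c (S.erase 0)
    (fun x hx => Finset.ne_of_mem_erase hx) (fun x hx => by
      have hxS := (Finset.mem_filter.mp (Finset.mem_of_mem_erase hx)).2
      rw [← hf_inv x (Finset.ne_of_mem_erase hx), hxS, hA]
      rfl)
  have hle : S.card ≤ (S.erase 0).card + 1 := by
    have := Finset.pred_card_le_card_erase (s := S) (a := 0)
    omega
  rw [hncard]
  set t := (S.erase 0).card
  have hle' : (S.card : ℝ) ≤ t + 1 := by exact_mod_cast hle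
  have hnat : t * t + 2 ≤ 2 ^ (n + 1) + t := by rw [pow_succ]; omega
  have hreal : (t : ℝ) * t + 2 ≤ 2 ^ (n + 1) + t := by exact_mod_cast hnat
  have hsqrt : (t : ℝ) - 1 / 2 ≤ Real.sqrt (2 ^ (n + 1)) := Real.le_sqrt_of_sq_le (by nlinarith)
  linarith
end

section
/- Let n ≥ 2 be an even integer and F = GaloisField 2 n. Then the number of x ∈ F with x^(2^n − 2) = x^(2^(n/2)) equals 2^(n/2) + 2. (Consequently the Field Inverse Function agrees with the linear map x ↦ x^(2^(n/2)) in exactly 2^(n/2) + 2 points.) -/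
/-- In a finite field with `q > 2` elements, the inverse function `x ↦ x ^ (q - 2)` agrees with
`x ↦ x ^ k`, `k ≠ 0`, at zero and at the `(k + 1)`-st roots of unity. -/
theorem FiniteField.setOf_pow_card_sub_two_eq_pow {K : Type*} [Field K] [Finite K]
    (hK : 2 < Nat.card K) {k : ℕ} (hk : k ≠ 0) :
    {x : K | x ^ (Nat.card K - 2) = x ^ k} =
      insert 0 (Units.val '' ((powMonoidHom (k + 1) : Kˣ →* Kˣ).ker : Set Kˣ)) := by
  have hpow (u : Kˣ) : u ^ (Nat.card K - 2) = u⁻¹ := by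
    rw [eq_inv_iff_mul_eq_one, ← pow_succ,
      show Nat.card K - 2 + 1 = Nat.card Kˣ by rw [Nat.card_units]; omega, pow_card_eq_one']
  ext x
  rcases eq_or_ne x 0 with rfl | hx
  · simp [zero_pow hk, zero_pow (Nat.sub_ne_zero_of_lt hK)]
  · lift x to Kˣ using hx.isUnit
    simp only [Set.mem_ofPred_eq, Set.mem_insert_iff, hx, false_or,
      Units.val_injective.mem_set_image, SetLike.mem_coe, MonoidHom.mem_ker, powMonoidHom_apply]
    rw [← Units.val_pow_eq_pow_val, ← Units.val_pow_eq_pow_val, Units.val_inj, hpow, pow_succ,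
      ← eq_inv_iff_mul_eq_one, eq_comm]

theorem FiniteField.ncard_setOf_pow_card_sub_two_eq_pow {K : Type*} [Field K] [Finite K]
    (hK : 2 < Nat.card K) {k : ℕ} (hk : k ≠ 0) :
    {x : K | x ^ (Nat.card K - 2) = x ^ k}.ncard = (Nat.card K - 1).gcd (k + 1) + 1 := by
  rw [setOf_pow_card_sub_two_eq_pow hK hk, Set.ncard_insert_of_notMem (by simp),
    Set.ncard_image_of_injective _ Units.val_injective, ← Nat.card_coe_set_eq,
    SetLike.coe_sort_coe, IsCyclic.card_powMonoidHom_ker, Nat.card_units]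

theorem inverse_agrees_with_frobenius_power
    (n : ℕ) (hn : 2 ≤ n) (hne : Even n) :
    {x : GaloisField 2 n | x ^ (2 ^ n - 2) = x ^ (2 ^ (n / 2))}.ncard =
      2 ^ (n / 2) + 2 := by
  have hcard : Nat.card (GaloisField 2 n) = 2 ^ n := GaloisField.card 2 n (by omega)
  have hlt : 2 < Nat.card (GaloisField 2 n) := by
    rw [hcard]
    exact lt_self_pow₀ one_lt_two hn
  have hdvd : 2 ^ (n / 2) + 1 ∣ 2 ^ n - 1 := by
    rw [← Nat.div_two_mul_two_of_even hne, pow_mul, Nat.mul_div_cancel _ two_pos]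
    exact ⟨2 ^ (n / 2) - 1, by simpa using Nat.sq_sub_sq (2 ^ (n / 2)) 1⟩
  rw [← hcard, FiniteField.ncard_setOf_pow_card_sub_two_eq_pow hlt (by positivity), hcard,
    Nat.gcd_eq_right hdvd]
end

section
/- Let n ≥ 4 be an integer divisible by 4 and F = GaloisField 2 n. Then the number of x ∈ F with x^(2^(n/2 − 1) + 1) = x^(2^(n−1)) equals 2^(n/2) + 2. (Consequently the Gold-type function x ↦ x^(2^(n/2−1)+1) agrees with the linear map x ↦ x^(2^(n−1)) in exactly 2^(n/2) + 2 points.) -/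
/-- In a finite field `F`, there are exactly `k` roots of `x ^ k = 1` whenever `k ∣ |F| - 1`. -/
theorem FiniteField.ncard_pow_eq_one_of_dvd {F : Type*} [Field F] [Finite F] {k : ℕ}
    (hk : k ∣ Nat.card F - 1) : {x : F | x ^ k = 1}.ncard = k := by
  obtain ⟨d, hd⟩ := hk
  have hpos : 0 < Nat.card F - 1 := Nat.sub_pos_of_lt Finite.one_lt_card
  have hk0 : 0 < k := Nat.pos_of_ne_zero fun h ↦ by simp [hd, h] at hpos
  obtain ⟨g, hg⟩ := IsCyclic.exists_ofOrder_eq_natCard (α := Fˣ)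
  rw [Nat.card_units] at hg
  have hprim : IsPrimitiveRoot ((g : F) ^ d) k :=
    (IsPrimitiveRoot.coe_units_iff.mpr (hg ▸ IsPrimitiveRoot.orderOf g)).pow hpos
      (by rw [hd, mul_comm])
  have hset : {x : F | x ^ k = 1} = ↑(Polynomial.nthRootsFinset k (1 : F)) := by
    ext x
    simp [Polynomial.mem_nthRootsFinset hk0]
  rw [hset, Set.ncard_coe_finset, hprim.card_nthRootsFinset]

theorem gold_agrees_with_inverse_frobenius
    (n : ℕ) (hn : 4 ≤ n) (hn4 : 4 ∣ n) :
    {x : GaloisField 2 n | x ^ (2 ^ (n / 2 - 1) + 1) = x ^ (2 ^ (n - 1))}.ncard =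
      2 ^ (n / 2) + 2 := by
  obtain ⟨m, rfl⟩ : ∃ m, n = 2 * (m + 1) := ⟨n / 2 - 1, by omega⟩
  have hcard : Nat.card (GaloisField 2 (2 * (m + 1))) = 2 ^ (2 * (m + 1)) :=
    GaloisField.card 2 _ (by omega)
  simp only [show 2 * (m + 1) / 2 = m + 1 by omega, show m + 1 - 1 = m by omega]
  have hset : {x : GaloisField 2 (2 * (m + 1)) | x ^ (2 ^ m + 1) = x ^ (2 ^ (2 * (m + 1) - 1))} =
      insert 0 {x | x ^ (2 ^ (m + 1) + 1) = 1} := by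
    ext x
    have hfrob : (x ^ (2 ^ (2 * (m + 1) - 1))) ^ 2 = x := by
      have := Fintype.ofFinite (GaloisField 2 (2 * (m + 1)))
      rw [← pow_mul, ← pow_succ, show 2 * (m + 1) - 1 + 1 = 2 * (m + 1) by omega, ← hcard,
        Nat.card_eq_fintype_card, FiniteField.pow_card]
    have hgold : (x ^ (2 ^ m + 1)) ^ 2 = x ^ (2 ^ (m + 1) + 1) * x := by ring
    rw [Set.mem_ofPred_eq, Set.mem_insert_iff, Set.mem_ofPred_eq,
      ← (frobenius_inj (GaloisField 2 (2 * (m + 1))) 2).eq_iff, frobenius_def, frobenius_def,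
      hfrob, hgold, mul_left_eq_self₀, or_comm]
  rw [hset, Set.ncard_insert_of_notMem (by simp) (Set.toFinite _),
    FiniteField.ncard_pow_eq_one_of_dvd]
  exact ⟨2 ^ (m + 1) - 1, by rw [hcard, pow_mul', ← Nat.sq_sub_sq, one_pow]⟩
end

section
/- Let n, t be positive integers, V = (Fin n → ZMod 2), S ⊆ V a Sidon set, and w ∈ V. Let T₁, …, T_t be pairwise distinct subsets of S, each of cardinality 3 and each with element-sum ∑_{x ∈ Tᵢ} x = w (a w-centered gerbera configuration of size t contained in S). Then: (i) the leaves are pairwise disjoint, i.e. Tᵢ ∩ Tⱼ = ∅ for i ≠ j; and (ii) the affine span of T₁ ∪ ⋯ ∪ T_t has dimension at most 2t, i.e. the 𝔽₂-dimension of the vector span of the differences of points of ⋃ᵢ Tᵢ is at most 2t. -/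
/-- In a Sidon set, a two-element subset is determined by the sum of its elements. -/
theorem eq_of_card_eq_two_of_sum_eq {V : Type*} [AddCommGroup V] {S : Set V}
    (hS : ∀ x ∈ S, ∀ y ∈ S, ∀ z ∈ S, ∀ w ∈ S, x + y = z + w →
      ({x, y, z, w} : Set V).ncard ≤ 2)
    {A B : Finset V} (hAS : ↑A ⊆ S) (hBS : ↑B ⊆ S) (hA : A.card = 2) (hB : B.card = 2)
    (h : ∑ x ∈ A, x = ∑ x ∈ B, x) : A = B := by
  classical
  have hAB : (A ∪ B).card ≤ 2 := by
    obtain ⟨a, b, hab, rfl⟩ := Finset.card_eq_two.mp hA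
    obtain ⟨c, d, hcd, rfl⟩ := Finset.card_eq_two.mp hB
    rw [Finset.sum_pair hab, Finset.sum_pair hcd] at h
    have hcard := hS a (hAS (by simp)) b (hAS (by simp)) c (hBS (by simp)) d (hBS (by simp)) h
    rw [← Set.ncard_coe_finset]
    convert hcard using 2
    ext x
    simp only [Finset.coe_union, Finset.coe_insert, Finset.coe_singleton, Set.mem_union,
      Set.mem_insert_iff, Set.mem_singleton_iff, or_assoc]
  exact (Finset.eq_of_subset_of_card_le Finset.subset_union_left (hA ▸ hAB)).trans
    (Finset.eq_of_subset_of_card_le Finset.subset_union_right (hB ▸ hAB)).symm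

/-- In a Sidon set, two three-element subsets with the same sum and a common element coincide. -/
theorem eq_of_card_eq_three_of_sum_eq_of_mem {V : Type*} [AddCommGroup V] {S : Set V}
    (hS : ∀ x ∈ S, ∀ y ∈ S, ∀ z ∈ S, ∀ w ∈ S, x + y = z + w →
      ({x, y, z, w} : Set V).ncard ≤ 2)
    {A B : Finset V} (hAS : ↑A ⊆ S) (hBS : ↑B ⊆ S) (hA : A.card = 3) (hB : B.card = 3)
    (h : ∑ x ∈ A, x = ∑ x ∈ B, x) {x : V} (hxA : x ∈ A) (hxB : x ∈ B) : A = B := by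
  classical
  have herase : A.erase x = B.erase x := by
    refine eq_of_card_eq_two_of_sum_eq hS
      (fun y hy => hAS (Finset.mem_of_mem_erase (Finset.mem_coe.mp hy)))
      (fun y hy => hBS (Finset.mem_of_mem_erase (Finset.mem_coe.mp hy)))
      (by rw [Finset.card_erase_of_mem hxA, hA]) (by rw [Finset.card_erase_of_mem hxB, hB]) ?_
    rw [← Finset.add_sum_erase A _ hxA, ← Finset.add_sum_erase B _ hxB] at h
    exact add_left_cancel h
  rw [← Finset.insert_erase hxA, herase, Finset.insert_erase hxB]

/-- Over `ZMod 2`, a three-element set translated by its sum lies in the span of two vectors. -/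
theorem exists_sub_sum_mem_span_range {V : Type*} [AddCommGroup V] [Module (ZMod 2) V]
    {A : Finset V} (hA : A.card = 3) :
    ∃ f : Fin 2 → V, ∀ p ∈ A, p - ∑ x ∈ A, x ∈ Submodule.span (ZMod 2) (Set.range f) := by
  classical
  obtain ⟨a, b, c, hab, hac, hbc, rfl⟩ := Finset.card_eq_three.mp hA
  have hsum : ∑ x ∈ ({a, b, c} : Finset V), x = a + b + c := by
    rw [Finset.sum_insert (by simp [hab, hac]), Finset.sum_pair hbc, add_assoc]
  rw [hsum]
  refine ⟨![a - (a + b + c), b - (a + b + c)], fun p hp => ?_⟩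
  have ha := Submodule.subset_span (R := ZMod 2)
    (Set.mem_range_self (f := ![a - (a + b + c), b - (a + b + c)]) 0)
  have hb := Submodule.subset_span (R := ZMod 2)
    (Set.mem_range_self (f := ![a - (a + b + c), b - (a + b + c)]) 1)
  simp only [Finset.mem_insert, Finset.mem_singleton] at hp
  rcases hp with rfl | rfl | rfl
  · exact ha
  · exact hb
  · convert Submodule.add_mem _ ha hb using 1
    have hdouble (v : V) : v + v = 0 := by
      rw [← two_smul (ZMod 2) v, show (2 : ZMod 2) = 0 from rfl, zero_smul]
    simp only [Matrix.cons_val_zero, Matrix.cons_val_one]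
    rw [← sub_eq_zero, ← hdouble p]
    abel

theorem gerbera_disjoint_leaves_and_span_bound
    (n t : ℕ) (hn : 0 < n) (ht : 0 < t)
    (S : Set (Fin n → ZMod 2))
    (hS : ∀ x ∈ S, ∀ y ∈ S, ∀ z ∈ S, ∀ w ∈ S, x + y = z + w →
      ({x, y, z, w} : Set (Fin n → ZMod 2)).ncard ≤ 2)
    (w : Fin n → ZMod 2)
    (T : Fin t → Finset (Fin n → ZMod 2))
    (hTinj : Function.Injective T)
    (hTS : ∀ i, ↑(T i) ⊆ S)
    (hTcard : ∀ i, (T i).card = 3)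
    (hTsum : ∀ i, (∑ x ∈ T i, x) = w) :
    (∀ i j, i ≠ j → Disjoint (T i) (T j)) ∧
      Module.finrank (ZMod 2)
        (Submodule.span (ZMod 2)
          {v : Fin n → ZMod 2 |
            ∃ p ∈ ⋃ i, (T i : Set (Fin n → ZMod 2)),
            ∃ q ∈ ⋃ i, (T i : Set (Fin n → ZMod 2)), v = p - q}) ≤ 2 * t := by
  refine ⟨fun i j hij => Finset.disjoint_left.mpr fun x hxi hxj => hij (hTinj ?_), ?_⟩
  · exact eq_of_card_eq_three_of_sum_eq_of_mem hS (hTS i) (hTS j) (hTcard i) (hTcard j)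
      ((hTsum i).trans (hTsum j).symm) hxi hxj
  · choose f hf using fun i => exists_sub_sum_mem_span_range (hTcard i)
    let g : Fin t × Fin 2 → Fin n → ZMod 2 := fun k => f k.1 k.2
    have hg : ∀ p ∈ ⋃ i, (T i : Set (Fin n → ZMod 2)),
        p - w ∈ Submodule.span (ZMod 2) (Set.range g) := by
      intro p hp
      obtain ⟨i, hi⟩ := Set.mem_iUnion.mp hp
      have hmem := hf i p hi
      rw [hTsum i] at hmem
      refine Submodule.span_mono ?_ hmem
      rintro _ ⟨k, rfl⟩
      exact ⟨(i, k), rfl⟩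
    calc _ ≤ Module.finrank (ZMod 2) (Submodule.span (ZMod 2) (Set.range g)) := by
          refine Submodule.finrank_mono (Submodule.span_le.mpr ?_)
          rintro _ ⟨p, hp, q, hq, rfl⟩
          simpa using Submodule.sub_mem _ (hg p hp) (hg q hq)
      _ ≤ Fintype.card (Fin t × Fin 2) := finrank_range_le_card g
      _ = 2 * t := by simp [mul_comm]
end

section
/- Let s, n be positive integers and H₁, H₂ : Matrix (Fin s) (Fin (n+1)) (ZMod 2) matrices of rank n+1 whose last columns are the all-ones vector (H₁ i (Fin.last n) = 1 = H₂ i (Fin.last n) for all i). Let σ be a permutation of Fin s with permutation matrix P_σ. If the column space of P_σᵀ · H₁ equals the column space of H₂ (as subspaces of Fin s → ZMod 2), then there exists a matrix B : Matrix (Fin (n+1)) (Fin (n+1)) (ZMod 2) such that P_σᵀ · H₁ · B = H₂, B i (Fin.last n) = 0 for every i < n, and B (Fin.last n) (Fin.last n) = 1 (i.e. B has block shape [[A, 0],[b, 1]], so it encodes an affine transformation x ↦ xA + b). -/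
open Matrix

/-- The column space of a matrix over `ZMod 2`: the span of its columns. -/
def colSpace {s k : ℕ} (M : Matrix (Fin s) (Fin k) (ZMod 2)) :
    Submodule (ZMod 2) (Fin s → ZMod 2) :=
  Submodule.span (ZMod 2) (Set.range fun j : Fin k => fun i : Fin s => M i j)

theorem exists_mulVec_eq_of_mem_colSpace {s k : ℕ} {M : Matrix (Fin s) (Fin k) (ZMod 2)}
    {v : Fin s → ZMod 2} (hv : v ∈ colSpace M) : ∃ c : Fin k → ZMod 2, M *ᵥ c = v := by
  have h : v ∈ LinearMap.range M.mulVecLin := by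
    rw [Matrix.range_mulVecLin]
    exact hv
  exact h

theorem transpose_permMatrix_mul_apply {m k R : Type*} [Fintype m] [DecidableEq m]
    [NonAssocSemiring R] (σ : Equiv.Perm m) (M : Matrix m k R) (i : m) (j : k) :
    ((σ.permMatrix R)ᵀ * M) i j = M (σ.symm i) j := by
  rw [Matrix.transpose_permMatrix]
  simp [Equiv.Perm.permMatrix, PEquiv.toMatrix_toPEquiv_mul, Equiv.Perm.inv_def]

theorem permutation_inducing_sidon_isomorphism
    (s n : ℕ) (hs : 0 < s) (hn : 0 < n)
    (H₁ H₂ : Matrix (Fin s) (Fin (n + 1)) (ZMod 2))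
    (hrank1 : Module.finrank (ZMod 2) (colSpace H₁) = n + 1)
    (hrank2 : Module.finrank (ZMod 2) (colSpace H₂) = n + 1)
    (hlast1 : ∀ i, H₁ i (Fin.last n) = 1)
    (hlast2 : ∀ i, H₂ i (Fin.last n) = 1)
    (σ : Equiv.Perm (Fin s))
    (hspan : colSpace ((σ.permMatrix (ZMod 2))ᵀ * H₁) = colSpace H₂) :
    ∃ B : Matrix (Fin (n + 1)) (Fin (n + 1)) (ZMod 2),
      (σ.permMatrix (ZMod 2))ᵀ * H₁ * B = H₂ ∧
      (∀ i : Fin (n + 1), (i : ℕ) < n → B i (Fin.last n) = 0) ∧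
      B (Fin.last n) (Fin.last n) = 1 := by
  have hcol (j : Fin (n + 1)) :
      ∃ c, ((σ.permMatrix (ZMod 2))ᵀ * H₁) *ᵥ c = H₂.col j ∧
        (j = Fin.last n → c = Pi.single (Fin.last n) 1) := by
    by_cases hj : j = Fin.last n
    · refine ⟨Pi.single (Fin.last n) 1, ?_, fun _ => rfl⟩
      ext i
      rw [Matrix.mulVec_single_one, hj, Matrix.col_apply, Matrix.col_apply,
        transpose_permMatrix_mul_apply, hlast1, hlast2]
    · have hmem : H₂.col j ∈ colSpace ((σ.permMatrix (ZMod 2))ᵀ * H₁) := by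
        rw [hspan]
        exact Submodule.subset_span ⟨j, rfl⟩
      obtain ⟨c, hc⟩ := exists_mulVec_eq_of_mem_colSpace hmem
      exact ⟨c, hc, fun h => absurd h hj⟩
  choose c hc hlast using hcol
  refine ⟨Matrix.of fun i j => c j i, ?_, fun i hi => ?_, ?_⟩
  · ext i j
    exact congrFun (hc j) i
  · have hne : i ≠ Fin.last n := Fin.ne_of_lt hi
    simp [hlast _ rfl, hne]
  · simp [hlast _ rfl]
end

section
/- Let F = GaloisField 2 8 and f : F → F the Gold APN function f(x) = x³. Then for every affine map A : F → F, the Hamming distance satisfies |{x ∈ F : f(x) ≠ A(x)}| ≥ 240; equivalently dA(f) ≥ 240 = 2⁸ − 16. In particular dA(f) > 2⁸ − 2⁴ − 1, so the Liu–Mesnager–Chen conjectured upper bound dA(f) ≤ 2ⁿ − 2^(n/2) − 1 fails for n = 8. -/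
namespace GoldCube

/-- The bytes of `x ^ n` for `n < 509`, where `x ^ 8 = x ^ 4 + x ^ 3 + x ^ 2 + 1`. -/
def expTable : ℕ :=
  17429897082035206671946833562901976970575267767201448834474266404281756231769459003398279566182535598030042673248141362818414767440479849939637558076446431489893517535017621016186865498221605313846585256460229239267782503612737643261566707381251210028069710994708757698848633367441088735385102235231467809709944082990253134926320557120634719060369464403924612845380169127348761670038931367608445568630895616039957406350899355986336198050038779076256365599985991357055336788299959499099365948535175014314763105742723983720819568802642744097256837623002879462953024725605542062139916928568621657254605991047445743543524248723624207339035804217831269232109186951757017276567679289917683903192379648433104781259327479509119573177151384016173196948808931092467851054104212078914948742660326616162354377098891576958273258257517693970117824631309908885466123133005735954274258450948528386970060371933208240974942479227931578251256442715283741592133974053490982303621670690169663785962197813006094019688956822422345635143728382088022183375383241503923071749915502179760993657817718059850726322191009160394536018878117260397405493194472308632248306748691913306206020173978308703106605846734047636024313590265918504323623702439968113153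

/-- Nine-bit discrete logarithms to base `x`; the entry at `0` is `511`. -/
def logTable : ℕ :=
  1280280666129305506491242481180088866442554547362231281020481580358701154733866488309625975995803819116197753141050798388089235934454355882155688931352126142854390448891823515454322415812333188797835138712414237451015274497135146335612793950700125157310848901987831313779598718555618996575584736512941848386540218789159252811110303610035868940219848586817678377017499259534606727074997524392257737633677286565498708958917864074164318560704460621759142991302926360892411337809451197026850311898867336779097127415111092663223532408816216007425731672065250628178009275297987242579187014394471291884643606450888154213300275160870132769308911457331615672733956798010522398461528257297707223463756287

/-- Discrete logarithms of `v ^ (-3)`. -/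
def invCubeLogTable : ℕ :=
  30418529253689282983586131343517262177823259048103553510615928330213668504932404767832413748964669814247355041366933878982575591726487509288583140519517834168430202049434634321535349392438126826775082831546986705236964687883417898293115522835430946983783124546611588131988470406072684984247813736820378900868774844256990565238594634413177195466951038583003455462491112187124752608442097634490039605970135597928655125616645330044322980153366730638347157095105825222262316816289860950967795275752415596101293652655224727932472421151623786310063727353979311070343457416907945962312964112559132183165244133284784692264960

/-- The bytes of `a ^ 3`. -/
def cubeTable : ℕ :=
  4825741619554381551364119355218692789799943049491482215172595216935100959772956666607163330833528113819091211907111962175543611500529972777081702593975756701286906734743124551398736542786915463349814276259714320213650487302853375801530026614819762030479949969541292168899708284922333676618737438253924907183291278351378542242043910783120476556165552483331186841800352249752456949160895172841415161045955967658103669273402361896800666359703982451964949378500698323912112691708188662548374057902526010437741253467835317759908822401754081194928047433043007638987353512487294299666309251281927219801749941227508648640768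

/-- The entry at `s ^ 2 + s + 1`, `s ≠ 0, 1`, is the discrete logarithm of `s` or of `s + 1`. -/
def artinTable : ℕ :=
  3742053650892133432367999773538322459225928823527575869347258443714776254479140165467917224907425441524247810154869526657924289989896583575118061158399596852747533303049044454146860812871370817116195489703647816284062097020691375637785047810166457870896124289395243683535130804841042659693505292701667503879689426928431077538174392901137502850787009225925601014790878812954871976408631461648075517199849190487399548133111065026069165013939158189368719529792210929609310808011784196572371010201557810278906936625346393938457857583128865169765099072739081741593628654113402556952788409223189699760211031270407463072764208155055873587094724214408616090693905065815744021738163208612063636452277845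

/-- The position in `representative` of the orbit of `n ≥ 2` under `n ↦ n + 1`,
`n ↦ n⁻¹`, `n ↦ n ^ 2`. -/
def classTable : ℕ :=
  35953861982885574532433422172634445456711698952128244105983669348699985643661034956006359848589732853023024736717188539110196114800481179550013454801335985131417712225212331976177109952281795419125869675156342105018623923356593639786558058152389626513322756099022039071945033731512306688116939667069953114112

/-- Entry `n` of a table with entries of `w` bits. -/
def lookup (w table n : ℕ) : ℕ :=
  Nat.land (Nat.shiftRight table (Nat.mul w n)) (Nat.pred (Nat.pow 2 w))

def ex (n : ℕ) : ℕ := lookup 8 expTable n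

def lg (n : ℕ) : ℕ := lookup 9 logTable n

def invCubeLog (n : ℕ) : ℕ := lookup 8 invCubeLogTable n

def cube (n : ℕ) : ℕ := lookup 8 cubeTable n

def artin (n : ℕ) : ℕ := lookup 9 artinTable n

def orbitClass (n : ℕ) : ℕ := lookup 4 classTable n

/-- Orbit representatives, in the order in which they are excluded. -/
def representative (k : ℕ) : ℕ := lookup 8 15430469279062820354 k

/-- One of the two solutions `x` of `x ^ 3 + (x + v) ^ 3 = l`, if there are solutions. -/
def edge (v l : ℕ) : ℕ :=
  ex (Nat.add (lg v) (artin (ex (Nat.add (lg l) (invCubeLog v)))))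

/-- `force n k = k n`, with `n` reduced to a numeral before it is substituted. -/
def force {α : Type} (n : ℕ) (k : ℕ → α) : α :=
  Nat.rec (k 0) (fun m _ => k (Nat.succ m)) n

def allTrue (f : ℕ → Bool) (l : List ℕ) : Bool :=
  List.rec true (fun a _ ih => cond (f a) ih false) l

/-- The number `p = v + 256 * l` encodes the pair `(v, l)`. -/
def fstByte (p : ℕ) : ℕ := Nat.land p 255

def sndByte (p : ℕ) : ℕ := Nat.shiftRight p 8

def memBit (mask x : ℕ) : Bool := Nat.beq (Nat.land (Nat.shiftRight mask x) 1) 1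

def insertBit (mask x : ℕ) : ℕ := Nat.lor mask (Nat.shiftLeft 1 x)

/-- The set of first components of a list of pairs, as a bit mask. -/
def maskOf (hs : List ℕ) : ℕ := List.rec 0 (fun p _ ih => insertBit ih (fstByte p)) hs

/-- The span of `hs` and `q`, when `hs` lists a subspace. -/
def doubled (q : ℕ) (hs : List ℕ) : List ℕ :=
  List.rec [] (fun p _ ih => p :: force (Nat.xor p q) fun r => r :: ih) hs

/-- For each `(v, l)` in `hs` the smaller element of the pair `{x, x + v}` with
`x ^ 3 + (x + v) ^ 3 = l`, if it exists outside `mask`. -/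
def edges (mask : ℕ) (hs : List ℕ) : List ℕ :=
  List.rec [] (fun p _ ih =>
    force (fstByte p) fun v =>
    force (edge v (sndByte p)) fun x =>
    cond (memBit mask x) ih
      (force (Nat.xor x v) fun y => cond (Nat.ble x y) (x :: ih) (y :: ih))) hs

/-- The entries of a list that occurred before or belong to `seen`. -/
def repeated (xs : List ℕ) : ℕ → List ℕ :=
  List.rec (fun _ => []) (fun x _ ih seen =>
    cond (memBit seen x) (x :: ih seen) (force (insertBit seen x) ih)) xs

/-- The number of pairs `(v, l)` with `v ^ 3 = l + d`. -/
def zeros (d : ℕ) (hs : List ℕ) : ℕ :=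
  List.rec 0 (fun p _ ih =>
    cond (Nat.beq (Nat.xor (cube (fstByte p)) (sndByte p)) d) (Nat.succ ih) ih) hs

/-- The pair `(s, s ^ 3 + d)`. -/
def pack (d s : ℕ) : ℕ := Nat.add s (Nat.mul 256 (Nat.xor (cube s) d))

/-- Continue with the span of `hs` and `p`, unless no linear map has a graph containing both. -/
def adjoin (hs : List ℕ) (p : ℕ) (k : List ℕ → Bool) : Bool :=
  cond (allTrue (fun r => cond (Nat.beq (fstByte r) (fstByte p)) false true) hs)
    (k (doubled p hs)) (allTrue (fun r => cond (Nat.beq r p) false true) hs)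

/-- Test for a subspace of dimension seven. -/
def hyperplaneTest (d : ℕ) (hs : List ℕ) : Bool :=
  cond (Nat.ble (zeros d hs) 12)
    (force (maskOf hs) fun mask =>
      List.rec true (fun _ _ _ => false)
        (repeated (repeated (repeated (edges mask hs) 0) 0) 0)) false

/-- Test for a subspace of dimension six. -/
def sixDimTest (d : ℕ) (hs : List ℕ) : Bool :=
  cond (Nat.ble (zeros d hs) 9)
    (force (maskOf hs) fun mask =>
      allTrue (fun x => force (pack d x) fun p => hyperplaneTest d (doubled p hs))
        (repeated (edges mask hs) 0)) false

/-- The pairs `(a, b)` with `1 < a < n`, `a < b`, `a < a + b`, `a * b * (a + b) = d` and `b / a`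
in an orbit of class at least `k`. -/
def triples (k d n : ℕ) : List ℕ :=
  Nat.rec [] (fun a ih =>
    cond (Nat.ble a 1) ih
      (force (edge a (Nat.xor (cube a) d)) fun b =>
        cond (Nat.ble b a) ih
          (cond (Nat.ble (Nat.xor a b) a) ih
            (cond (Nat.ble k (orbitClass (ex (Nat.add (lg b) (Nat.sub 255 (lg a))))))
              (Nat.add a (Nat.mul 256 b) :: ih) ih)))) n

def adjoinTriple (d : ℕ) (hs : List ℕ) (t : ℕ) (k : List ℕ → Bool) : Bool :=
  force (pack d (fstByte t)) fun p => force (pack d (sndByte t)) fun q =>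
    adjoin hs p fun hs' => adjoin hs' q k

def allPairs (d : ℕ) (hs ts : List ℕ) : Bool :=
  List.rec true (fun t us ih =>
    cond (adjoinTriple d hs t fun hs' => allTrue (fun u => adjoinTriple d hs' u (sixDimTest d)) us)
      ih false) ts

def representativeTest (k : ℕ) : Bool :=
  force (representative k) fun y =>
  force (Nat.xor (ex (Nat.add (lg y) (lg y))) y) fun d =>
  adjoinTriple d [0] (Nat.add 1 (Nat.mul 256 y)) fun hs => allPairs d hs (triples k d 256)

set_option maxRecDepth 100000 in
theorem representativeTest_eq_true : ∀ k < 8, representativeTest k = true := by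
  decide +kernel

section Tables

theorem lookup_lt (w table n : ℕ) : lookup w table n < 2 ^ w :=
  lt_of_le_of_lt Nat.and_le_right (Nat.pred_lt (pow_pos two_pos w).ne')

theorem ex_lt (n : ℕ) : ex n < 256 := lookup_lt 8 _ n

theorem edge_lt (v l : ℕ) : edge v l < 256 := ex_lt _

theorem cube_lt (n : ℕ) : cube n < 256 := lookup_lt 8 _ n

theorem ex_succ : ∀ n < 508, ex (n + 1) =
    if (ex n).testBit 7 then (2 * ex n) ^^^ 285 else 2 * ex n := by
  decide +kernel

theorem ex_lg : ∀ a < 256, 0 < a → ex (lg a) = a ∧ lg a < 255 := by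
  decide +kernel

theorem ex_lg_zero_add : ∀ n < 255, ex (lg 0 + n) = 0 := by
  decide +kernel

theorem lg_pos : ∀ a < 256, 1 < a → 0 < lg a := by
  decide +kernel

theorem invCubeLog_spec : ∀ v < 256, 0 < v →
    invCubeLog v < 255 ∧ (invCubeLog v + 3 * lg v) % 255 = 0 := by
  decide +kernel

theorem artin_spec : ∀ s < 256, 1 < s →
    artin (ex (lg s + lg s) ^^^ s ^^^ 1) = lg s ∨
      artin (ex (lg s + lg s) ^^^ s ^^^ 1) = lg (s ^^^ 1) := by
  decide +kernel

theorem cube_spec : ∀ a < 256, cube a = if a = 0 then 0 else ex (3 * lg a % 255) := by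
  decide +kernel

theorem representative_spec : ∀ k < 8, 1 < representative k ∧ representative k < 256 := by
  decide +kernel

theorem orbitClass_spec : ∀ n < 256, 1 < n → orbitClass n < 8 ∧ ∃ i < 8,
    ex (2 ^ i * lg n % 255) ∈
      [representative (orbitClass n),
       representative (orbitClass n) ^^^ 1,
       ex (255 - lg (representative (orbitClass n))),
       ex (255 - lg (representative (orbitClass n))) ^^^ 1,
       ex (255 - lg (representative (orbitClass n) ^^^ 1)),
       ex (255 - lg (representative (orbitClass n) ^^^ 1)) ^^^ 1] := by
  decide +kernel

end Tables

section Coordinates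

variable {F : Type*} [Field F]

/-- The element of `F` with coordinates the bits of `n` in the basis `1, g, …, g ^ 7`. -/
def decode (g : F) (n : ℕ) : F := ∑ i ∈ Finset.range 8, if n.testBit i then g ^ i else 0

theorem decode_zero (g : F) : decode g 0 = 0 := by
  simp [decode]

theorem decode_one (g : F) : decode g 1 = 1 := by
  simp [decode, Finset.sum_range_succ, Nat.testBit_eq_decide_div_mod_eq]

theorem decode_two_mul (g : F) (n : ℕ) :
    decode g (2 * n) + (if n.testBit 7 then g ^ 8 else 0) = g * decode g n := by
  have hbit (i : ℕ) : (2 * n).testBit (i + 1) = n.testBit i := by simp [Nat.testBit_succ]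
  rw [decode, decode, Finset.sum_range_succ', Finset.mul_sum, Finset.sum_range_succ _ 7]
  simp only [hbit, pow_succ', mul_ite, mul_zero]
  simp

/-- `g` is a root of the primitive polynomial `X ^ 8 + X ^ 4 + X ^ 3 + X ^ 2 + 1`. -/
def IsOcticRoot (g : F) : Prop := g ^ 8 = g ^ 4 + g ^ 3 + g ^ 2 + 1

theorem IsOcticRoot.ne_zero {g : F} (hg : IsOcticRoot g) : g ≠ 0 := by
  rintro rfl
  simp [IsOcticRoot] at hg

variable [CharP F 2]

theorem decode_xor (g : F) (a b : ℕ) : decode g (a ^^^ b) = decode g a + decode g b := by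
  rw [decode, decode, decode, ← Finset.sum_add_distrib]
  refine Finset.sum_congr rfl fun i _ => ?_
  rw [Nat.testBit_xor]
  cases a.testBit i <;> cases b.testBit i <;> simp [CharTwo.add_self_eq_zero]

variable {g : F}

theorem decode_ex (hg : IsOcticRoot g) {n : ℕ} (hn : n < 509) : decode g (ex n) = g ^ n := by
  induction n with
  | zero =>
    exact (congrArg (decode g) (by decide +kernel : ex 0 = 1)).trans
      ((decode_one g).trans (pow_zero g).symm)
  | succ n ih =>
    have hstep := decode_two_mul g (ex n)
    rw [ih (by omega), ← pow_succ'] at hstep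
    rw [ex_succ n (by omega), ← hstep]
    split_ifs with hbit
    · have h285 : decode g 285 = g ^ 8 := by
        rw [show g ^ 8 = _ from hg]
        simp [decode, Finset.sum_range_succ, Nat.testBit_eq_decide_div_mod_eq]
        ring
      rw [decode_xor, h285]
    · rw [add_zero]

theorem pow_255 (hg : IsOcticRoot g) : g ^ 255 = 1 := by
  rw [← decode_ex hg (by norm_num)]
  exact (congrArg (decode g) (by decide +kernel : ex 255 = 1)).trans (decode_one g)

theorem pow_mod_255 (hg : IsOcticRoot g) (n : ℕ) : g ^ (n % 255) = g ^ n := by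
  conv_rhs => rw [← Nat.mod_add_div n 255, pow_add, pow_mul, pow_255 hg, one_pow, mul_one]

theorem pow_lg (hg : IsOcticRoot g) {a : ℕ} (ha : a < 256) (h0 : 0 < a) :
    g ^ lg a = decode g a := by
  obtain ⟨h1, h2⟩ := ex_lg a ha h0
  rw [← decode_ex hg (by omega), h1]

theorem decode_ne_zero (hg : IsOcticRoot g) {a : ℕ} (ha : a < 256) (h0 : 0 < a) :
    decode g a ≠ 0 := by
  rw [← pow_lg hg ha h0]
  exact pow_ne_zero _ (hg.ne_zero)

theorem decode_injOn (hg : IsOcticRoot g) {a b : ℕ} (ha : a < 256) (hb : b < 256)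
    (h : decode g a = decode g b) : a = b := by
  by_contra hne
  refine decode_ne_zero hg (Nat.xor_lt_two_pow (n := 8) ha hb)
    (Nat.pos_of_ne_zero fun h0 => hne (Nat.xor_eq_zero_iff.mp h0)) ?_
  rw [decode_xor, h, CharTwo.add_self_eq_zero]

theorem decode_ex_lg_add (hg : IsOcticRoot g) {a n : ℕ} (ha : a < 256) (hn : n < 255) :
    decode g (ex (lg a + n)) = decode g a * g ^ n := by
  rcases Nat.eq_zero_or_pos a with rfl | h0
  · rw [ex_lg_zero_add n hn, decode_zero, zero_mul]
  · obtain ⟨-, h2⟩ := ex_lg a ha h0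
    rw [decode_ex hg (by omega), pow_add, pow_lg hg ha h0]

theorem decode_cube (hg : IsOcticRoot g) {a : ℕ} (ha : a < 256) :
    decode g (cube a) = decode g a ^ 3 := by
  rw [cube_spec a ha]
  split_ifs with h
  · simp [h, decode_zero]
  · rw [decode_ex hg (by omega), pow_mod_255 hg, mul_comm, pow_mul,
      pow_lg hg ha (Nat.pos_of_ne_zero h)]

theorem decode_ex_sub_lg (hg : IsOcticRoot g) {a : ℕ} (ha : a < 256) (h0 : 0 < a) :
    decode g (ex (255 - lg a)) = (decode g a)⁻¹ := by
  obtain ⟨-, h2⟩ := ex_lg a ha h0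
  refine eq_inv_of_mul_eq_one_left ?_
  rw [decode_ex hg (by omega), ← pow_lg hg ha h0, ← pow_add, Nat.sub_add_cancel h2.le, pow_255 hg]

theorem pow_invCubeLog (hg : IsOcticRoot g) {v : ℕ} (hv : v < 256) (h0 : 0 < v) :
    g ^ invCubeLog v * decode g v ^ 3 = 1 := by
  rw [← pow_lg hg hv h0, ← pow_mul, ← pow_add, mul_comm (lg v), ← pow_mod_255 hg,
    (invCubeLog_spec v hv h0).2, pow_zero]

theorem exists_decode_eq (hg : IsOcticRoot g) [Fintype F] (hF : Fintype.card F = 256) (x : F) :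
    ∃ n < 256, decode g n = x := by
  have hbij : Function.Bijective fun n : Fin 256 => decode g n :=
    (Fintype.bijective_iff_injective_and_card _).mpr
      ⟨fun a b h => Fin.ext (decode_injOn hg a.2 b.2 h), by simp [hF]⟩
  obtain ⟨n, hn⟩ := hbij.2 x
  exact ⟨n, n.2, hn⟩

theorem edge_spec (hg : IsOcticRoot g) [Fintype F] (hF : Fintype.card F = 256) {v l : ℕ}
    (hv : v < 256) (hl : l < 256) {x : F} (hx : x ≠ 0) (hxv : x + decode g v ≠ 0)
    (h0 : decode g v ≠ 0)
    (h : x ^ 3 + (x + decode g v) ^ 3 = decode g l) :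
    decode g (edge v l) = x ∨ decode g (edge v l) = x + decode g v := by
  have hv0 : 0 < v := Nat.pos_of_ne_zero fun h' => h0 (by rw [h', decode_zero])
  have h2 : (2 : F) = 0 := CharTwo.two_eq_zero
  obtain ⟨s, hs, hsx⟩ := exists_decode_eq hg hF (x / decode g v)
  have hxs : x = decode g s * decode g v := by rw [hsx]; field_simp
  have hs0 : s ≠ 0 := by rintro rfl; exact hx (by rw [hxs, decode_zero, zero_mul])
  have hs1 : s ≠ 1 := by
    rintro rfl
    exact hxv (by rw [hxs, decode_one, one_mul, CharTwo.add_self_eq_zero])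
  have hlgs := (ex_lg s hs (by omega)).2
  have hk : ex (lg l + invCubeLog v) = ex (lg s + lg s) ^^^ s ^^^ 1 := by
    refine decode_injOn hg (ex_lt _)
      (Nat.xor_lt_two_pow (n := 8) (Nat.xor_lt_two_pow (n := 8) (ex_lt _) hs) (by norm_num)) ?_
    rw [decode_ex_lg_add hg hl (invCubeLog_spec v hv hv0).1, decode_xor, decode_xor,
      decode_ex_lg_add hg hs hlgs, pow_lg hg hs (by omega), decode_one, ← h, hxs]
    have hinv := pow_invCubeLog hg hv hv0
    linear_combination (2 * decode g s ^ 3 + 3 * decode g s ^ 2 + 3 * decode g s + 1) * hinv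
      + (decode g s ^ 3 + decode g s ^ 2 + decode g s) * h2
  have hlt : s ^^^ 1 < 256 := Nat.xor_lt_two_pow (n := 8) hs (by norm_num)
  have hpos : 0 < s ^^^ 1 := Nat.pos_of_ne_zero fun h' => hs1 (Nat.xor_eq_zero_iff.mp h')
  rw [edge]
  change decode g (ex (lg v + artin (ex (lg l + invCubeLog v)))) = x ∨
    decode g (ex (lg v + artin (ex (lg l + invCubeLog v)))) = x + decode g v
  rw [hk]
  rcases artin_spec s hs (by omega) with h' | h' <;> rw [h']
  · left
    rw [decode_ex_lg_add hg hv hlgs, pow_lg hg hs (by omega), hxs, mul_comm]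
  · right
    rw [decode_ex_lg_add hg hv (ex_lg _ hlt hpos).2, pow_lg hg hlt hpos, decode_xor,
      decode_one, hxs]
    ring

end Coordinates

section Lists

theorem force_eq {α : Type} (n : ℕ) (k : ℕ → α) : force n k = k n := by
  cases n <;> rfl

theorem allTrue_iff {f : ℕ → Bool} {l : List ℕ} :
    allTrue f l = true ↔ ∀ a ∈ l, f a = true := by
  induction l with
  | nil => simp [allTrue]
  | cons a l ih =>
    have : allTrue f (a :: l) = cond (f a) (allTrue f l) false := rfl
    rw [this, List.forall_mem_cons, ← ih]
    cases f a <;> simp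

theorem memBit_eq_testBit (mask x : ℕ) : memBit mask x = mask.testBit x := by
  rw [Bool.eq_iff_iff]
  simp only [memBit, Nat.testBit, Nat.beq_eq]
  change mask >>> x &&& 1 = 1 ↔ _
  rw [Nat.and_comm 1]
  simp [Nat.and_one_is_mod]

theorem memBit_insertBit (mask x y : ℕ) :
    memBit (insertBit mask y) x = true ↔ memBit mask x = true ∨ y = x := by
  rw [memBit_eq_testBit, memBit_eq_testBit]
  change (mask ||| 1 <<< y).testBit x = true ↔ _
  rw [Nat.testBit_or, Nat.one_shiftLeft, Nat.testBit_two_pow]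
  simp

theorem memBit_maskOf {hs : List ℕ} {x : ℕ} :
    memBit (maskOf hs) x = true ↔ ∃ p ∈ hs, fstByte p = x := by
  induction hs with
  | nil => simp [maskOf, memBit_eq_testBit]
  | cons p hs ih =>
    have : maskOf (p :: hs) = insertBit (maskOf hs) (fstByte p) := rfl
    rw [this, memBit_insertBit, ih]
    simp [or_comm]

theorem mem_doubled {q r : ℕ} {hs : List ℕ} :
    r ∈ doubled q hs ↔ ∃ p ∈ hs, r = p ∨ r = p ^^^ q := by
  induction hs with
  | nil => simp [doubled]
  | cons p hs ih =>
    have : doubled q (p :: hs) = p :: force (Nat.xor p q) fun r => r :: doubled q hs := rfl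
    rw [this, force_eq]
    change r ∈ p :: (p ^^^ q) :: doubled q hs ↔ _
    rw [List.mem_cons, List.mem_cons, ih]
    simp [or_assoc]

theorem card_le_count_edges {mask n : ℕ} {hs : List ℕ} {T : Finset ℕ}
    (hT : ∀ p ∈ T, p ∈ hs ∧ memBit mask (edge (fstByte p) (sndByte p)) = false ∧
      min (edge (fstByte p) (sndByte p)) (edge (fstByte p) (sndByte p) ^^^ fstByte p) = n) :
    T.card ≤ (edges mask hs).count n := by
  induction hs generalizing T with
  | nil =>
    rw [Finset.card_eq_zero.mpr (Finset.eq_empty_of_forall_notMem fun p hp => by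
      simpa using hT p hp)]
    exact Nat.zero_le _
  | cons p hs ih =>
    have hstep : edges mask (p :: hs) = cond (memBit mask (edge (fstByte p) (sndByte p)))
        (edges mask hs)
        (min (edge (fstByte p) (sndByte p)) (edge (fstByte p) (sndByte p) ^^^ fstByte p) ::
          edges mask hs) := by
      have : edges mask (p :: hs) = force (fstByte p) fun v =>
        force (edge v (sndByte p)) fun x =>
        cond (memBit mask x) (edges mask hs) (force (Nat.xor x v) fun y =>
          cond (Nat.ble x y) (x :: edges mask hs) (y :: edges mask hs)) := rfl
      rw [this, force_eq, force_eq, force_eq]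
      congr 1
      generalize edge (fstByte p) (sndByte p) = x
      change cond (Nat.ble x (x ^^^ fstByte p)) _ _ = _
      cases h : Nat.ble x (x ^^^ fstByte p)
      · have : ¬ x ≤ x ^^^ fstByte p := fun h' => by simp [Nat.ble_eq_true_of_le h'] at h
        rw [min_eq_right (by omega)]
        rfl
      · rw [min_eq_left (Nat.le_of_ble_eq_true h)]
        rfl
    have herase := ih (T := T.erase p) fun q hq => by
      obtain ⟨hqp, hqT⟩ := Finset.mem_erase.mp hq
      obtain ⟨h1, h2⟩ := hT q hqT
      exact ⟨(List.mem_cons.mp h1).resolve_left hqp, h2⟩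
    by_cases hp : p ∈ T
    · obtain ⟨-, h2, h3⟩ := hT p hp
      rw [hstep, h2, cond_false, h3, List.count_cons_self]
      have := Finset.card_erase_add_one hp
      omega
    · rw [Finset.erase_eq_of_notMem hp] at herase
      refine herase.trans ?_
      rw [hstep]
      cases memBit mask (edge (fstByte p) (sndByte p))
      · exact List.count_le_count_cons
      · exact le_rfl

theorem card_le_zeros {d : ℕ} {hs : List ℕ} {T : Finset ℕ}
    (hT : ∀ p ∈ T, p ∈ hs ∧ cube (fstByte p) ^^^ sndByte p = d) : T.card ≤ zeros d hs := by
  induction hs generalizing T with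
  | nil =>
    rw [Finset.card_eq_zero.mpr (Finset.eq_empty_of_forall_notMem fun p hp => by
      simpa using hT p hp)]
    exact Nat.zero_le _
  | cons p hs ih =>
    have hstep : zeros d (p :: hs) = cond (Nat.beq (cube (fstByte p) ^^^ sndByte p) d)
        (zeros d hs + 1) (zeros d hs) := rfl
    have herase := ih (T := T.erase p) fun q hq => by
      obtain ⟨hqp, hqT⟩ := Finset.mem_erase.mp hq
      obtain ⟨h1, h2⟩ := hT q hqT
      exact ⟨(List.mem_cons.mp h1).resolve_left hqp, h2⟩
    by_cases hp : p ∈ T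
    · rw [hstep, (hT p hp).2, Nat.beq_refl, cond_true]
      have := Finset.card_erase_add_one hp
      omega
    · rw [Finset.erase_eq_of_notMem hp] at herase
      refine herase.trans ?_
      rw [hstep]
      cases Nat.beq (cube (fstByte p) ^^^ sndByte p) d
      · exact le_rfl
      · exact Nat.le_succ _

theorem count_le_count_repeated (x : ℕ) (xs : List ℕ) (seen : ℕ) :
    xs.count x ≤ (repeated xs seen).count x + if memBit seen x then 0 else 1 := by
  induction xs generalizing seen with
  | nil => simp
  | cons y ys ih =>
    have hstep : repeated (y :: ys) seen =
        cond (memBit seen y) (y :: repeated ys seen) (repeated ys (insertBit seen y)) := by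
      have : repeated (y :: ys) seen = cond (memBit seen y) (y :: repeated ys seen)
        (force (insertBit seen y) (repeated ys)) := rfl
      rw [this, force_eq]
    rw [hstep]
    cases hy : memBit seen y
    · have h := ih (insertBit seen y)
      simp only [memBit_insertBit] at h
      rw [cond_false, List.count_cons]
      rcases eq_or_ne y x with rfl | hne
      · simp_all
      · simpa [hne] using h
    · have h := ih seen
      rw [cond_true, List.count_cons, List.count_cons]
      omega

theorem count_le_count_repeated_zero (x : ℕ) (xs : List ℕ) :
    xs.count x ≤ (repeated xs 0).count x + 1 := by
  simpa [memBit_eq_testBit] using count_le_count_repeated x xs 0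

theorem fstByte_lt (p : ℕ) : fstByte p < 256 :=
  lt_of_le_of_lt Nat.and_le_right (by norm_num)

theorem sndByte_lt {p : ℕ} (hp : p < 65536) : sndByte p < 256 := by
  change p >>> 8 < 256
  rw [Nat.shiftRight_eq_div_pow]
  omega

theorem fstByte_eq_mod (p : ℕ) : fstByte p = p % 256 :=
  Nat.and_two_pow_sub_one_eq_mod p 8

theorem sndByte_eq_div (p : ℕ) : sndByte p = p / 256 :=
  Nat.shiftRight_eq_div_pow p 8

theorem fstByte_xor (p q : ℕ) : fstByte (p ^^^ q) = fstByte p ^^^ fstByte q :=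
  Nat.and_xor_distrib_right

theorem sndByte_xor (p q : ℕ) : sndByte (p ^^^ q) = sndByte p ^^^ sndByte q :=
  Nat.shiftRight_xor_distrib

theorem fstByte_add_mul {a b : ℕ} (ha : a < 256) : fstByte (a + 256 * b) = a := by
  rw [fstByte_eq_mod]
  omega

theorem sndByte_add_mul {a b : ℕ} (ha : a < 256) : sndByte (a + 256 * b) = b := by
  rw [sndByte_eq_div]
  omega

theorem cube_xor_lt {d s : ℕ} (hd : d < 256) : cube s ^^^ d < 256 :=
  Nat.xor_lt_two_pow (n := 8) (cube_lt s) hd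

theorem fstByte_pack {d s : ℕ} (hs : s < 256) : fstByte (pack d s) = s :=
  fstByte_add_mul hs

theorem sndByte_pack {d s : ℕ} (hs : s < 256) : sndByte (pack d s) = cube s ^^^ d :=
  sndByte_add_mul hs

theorem pack_lt {d s : ℕ} (hd : d < 256) (hs : s < 256) : pack d s < 65536 := by
  have h : pack d s = s + 256 * (cube s ^^^ d) := rfl
  have := cube_xor_lt (s := s) hd
  omega

theorem eq_of_bytes_eq {p q : ℕ} (h1 : fstByte p = fstByte q) (h2 : sndByte p = sndByte q) :
    p = q := by
  rw [fstByte_eq_mod, fstByte_eq_mod] at h1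
  rw [sndByte_eq_div, sndByte_eq_div] at h2
  omega

theorem hyperplaneTest_iff {d : ℕ} {hs : List ℕ} : hyperplaneTest d hs = true ↔
    zeros d hs ≤ 12 ∧ repeated (repeated (repeated (edges (maskOf hs) hs) 0) 0) 0 = [] := by
  rw [hyperplaneTest, force_eq, ← Nat.ble_eq]
  cases Nat.ble (zeros d hs) 12
  · simp
  · cases repeated (repeated (repeated (edges (maskOf hs) hs) 0) 0) 0 <;> simp

theorem sixDimTest_iff {d : ℕ} {hs : List ℕ} : sixDimTest d hs = true ↔
    zeros d hs ≤ 9 ∧ ∀ x ∈ repeated (edges (maskOf hs) hs) 0,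
      hyperplaneTest d (doubled (pack d x) hs) = true := by
  rw [sixDimTest, force_eq, ← Nat.ble_eq]
  simp only [force_eq]
  rw [← allTrue_iff]
  cases Nat.ble (zeros d hs) 9 <;> simp

theorem adjoinTriple_eq (d : ℕ) (hs : List ℕ) (t : ℕ) (k : List ℕ → Bool) :
    adjoinTriple d hs t k = adjoin hs (pack d (fstByte t)) fun hs' =>
      adjoin hs' (pack d (sndByte t)) k := by
  rw [adjoinTriple, force_eq, force_eq]

theorem allPairs_sound {d : ℕ} {hs ts : List ℕ} (h : allPairs d hs ts = true) {t u : ℕ}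
    (ht : t ∈ ts) (hu : u ∈ ts) (htu : t ≠ u) :
    ∃ t' u', (t' = t ∧ u' = u ∨ t' = u ∧ u' = t) ∧ ∃ us, u' ∈ us ∧
      (adjoinTriple d hs t' fun hs' =>
        allTrue (fun v => adjoinTriple d hs' v (sixDimTest d)) us) = true := by
  induction ts with
  | nil => simp at ht
  | cons a ts ih =>
    have hstep : allPairs d hs (a :: ts) = cond (adjoinTriple d hs a fun hs' =>
      allTrue (fun v => adjoinTriple d hs' v (sixDimTest d)) ts) (allPairs d hs ts) false := rfl
    rw [hstep, Bool.cond_eq_true_distrib] at h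
    simp only [Bool.false_eq_true] at h
    split_ifs at h with ha
    rcases List.mem_cons.mp ht with rfl | ht'
    · exact ⟨t, u, .inl ⟨rfl, rfl⟩, ts, (List.mem_cons.mp hu).resolve_left htu.symm, ha⟩
    · rcases List.mem_cons.mp hu with rfl | hu'
      · exact ⟨u, t, .inr ⟨rfl, rfl⟩, ts, ht', ha⟩
      · exact ih h ht' hu'

theorem mem_triples {k d n a : ℕ} (h1 : 1 < a) (han : a < n)
    (hb : a < edge a (cube a ^^^ d)) (hab : a < a ^^^ edge a (cube a ^^^ d))
    (hk : k ≤ orbitClass (ex (lg (edge a (cube a ^^^ d)) + (255 - lg a)))) :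
    a + 256 * edge a (cube a ^^^ d) ∈ triples k d n := by
  induction n with
  | zero => omega
  | succ n ih =>
    have hstep : triples k d (n + 1) = cond (Nat.ble n 1) (triples k d n)
      (force (edge n (cube n ^^^ d)) fun b =>
        cond (Nat.ble b n) (triples k d n)
          (cond (Nat.ble (n ^^^ b) n) (triples k d n)
            (cond (Nat.ble k (orbitClass (ex (lg b + (255 - lg n)))))
              ((n + 256 * b) :: triples k d n) (triples k d n)))) := rfl
    rw [hstep, force_eq]
    rcases (Nat.lt_succ_iff_lt_or_eq.mp han) with h | rfl
    · have := ih h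
      simp only [Bool.cond_eq_ite]
      split_ifs <;> first | assumption | exact List.mem_cons_of_mem _ this
    · have hble {m n : ℕ} (h : m < n) : Nat.ble n m = false :=
        Bool.eq_false_iff.mpr fun h' => absurd (Nat.le_of_ble_eq_true h') (by omega)
      rw [hble h1, hble hb, hble hab, Nat.ble_eq_true_of_le hk]
      exact List.mem_cons_self

end Lists

section Soundness

variable {F : Type*} [Field F]

/-- The list `hs` enumerates the restriction of the graph of `L` to `H`. -/
structure Represents (g : F) (L : F →+ F) (H : AddSubgroup F) (hs : List ℕ) : Prop where
  graph : ∀ p ∈ hs, L (decode g (fstByte p)) = decode g (sndByte p)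
  lt : ∀ p ∈ hs, p < 65536
  mem_iff : ∀ x, x ∈ H ↔ ∃ p ∈ hs, decode g (fstByte p) = x

theorem represents_bot (g : F) (L : F →+ F) : Represents g L ⊥ [0] where
  graph p hp := by
    obtain rfl := List.mem_singleton.mp hp
    change L (decode g 0) = decode g 0
    rw [decode_zero, map_zero]
  lt p hp := by
    obtain rfl := List.mem_singleton.mp hp
    norm_num
  mem_iff x := by
    have : decode g (fstByte 0) = 0 := decode_zero g
    simp [this, eq_comm]

variable [CharP F 2]

/-- The subgroup generated by `H` and `s`. -/
def adjoinElement (H : AddSubgroup F) (s : F) : AddSubgroup F where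
  carrier := {x | x ∈ H ∨ x + s ∈ H}
  zero_mem' := Or.inl H.zero_mem
  add_mem' := by
    have h2 : s + s = 0 := CharTwo.add_self_eq_zero s
    rintro x y (hx | hx) (hy | hy)
    · exact .inl (H.add_mem hx hy)
    · exact .inr (by simpa [add_assoc] using H.add_mem hx hy)
    · exact .inr (by simpa [add_right_comm] using H.add_mem hx hy)
    · refine .inl ?_
      have := H.add_mem hx hy
      rwa [add_add_add_comm, h2, add_zero] at this
  neg_mem' := by
    intro x hx
    rwa [CharTwo.neg_eq x]

theorem two_mul_card_le_card_adjoinElement [Finite F] {H : AddSubgroup F} {s : F} (hs : s ∉ H) :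
    2 * Nat.card H ≤ Nat.card (adjoinElement H s) := by
  have hle : H ≤ adjoinElement H s := fun x hx => Or.inl hx
  have hmem : s ∈ adjoinElement H s := Or.inr (by rw [CharTwo.add_self_eq_zero]; exact H.zero_mem)
  obtain ⟨c, hc⟩ := AddSubgroup.card_dvd_of_le hle
  have hpos : 0 < Nat.card (adjoinElement H s) := Nat.card_pos
  have hc1 : c ≠ 1 := by
    rintro rfl
    have : H = adjoinElement H s := AddSubgroup.eq_of_le_of_card_ge hle (by omega)
    exact hs (this ▸ hmem)
  have hc0 : c ≠ 0 := by
    rintro rfl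
    omega
  rw [hc, mul_comm]
  exact Nat.mul_le_mul_left _ (by omega)

variable {g : F} {L : F →+ F} {H : AddSubgroup F} {hs : List ℕ}

theorem Represents.doubled (h : Represents g L H hs) {p : ℕ} (hp : p < 65536)
    (hL : L (decode g (fstByte p)) = decode g (sndByte p)) :
    Represents g L (adjoinElement H (decode g (fstByte p))) (doubled p hs) where
  graph r hr := by
    obtain ⟨q, hq, rfl | rfl⟩ := mem_doubled.mp hr
    · exact h.graph r hq
    · rw [fstByte_xor, sndByte_xor, decode_xor, decode_xor, map_add, h.graph q hq, hL]
  lt r hr := by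
    obtain ⟨q, hq, rfl | rfl⟩ := mem_doubled.mp hr
    · exact h.lt r hq
    · exact Nat.xor_lt_two_pow (n := 16) (h.lt q hq) hp
  mem_iff x := by
    change x ∈ H ∨ x + _ ∈ H ↔ _
    rw [h.mem_iff, h.mem_iff]
    constructor
    · rintro (⟨q, hq, rfl⟩ | ⟨q, hq, hqx⟩)
      · exact ⟨q, mem_doubled.mpr ⟨q, hq, .inl rfl⟩, rfl⟩
      · refine ⟨q ^^^ p, mem_doubled.mpr ⟨q, hq, .inr rfl⟩, ?_⟩
        rw [fstByte_xor, decode_xor, hqx, add_assoc, CharTwo.add_self_eq_zero, add_zero]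
    · rintro ⟨r, hr, rfl⟩
      obtain ⟨q, hq, rfl | rfl⟩ := mem_doubled.mp hr
      · exact .inl ⟨r, hq, rfl⟩
      · refine .inr ⟨q, hq, ?_⟩
        rw [fstByte_xor, decode_xor, add_assoc, CharTwo.add_self_eq_zero, add_zero]

theorem adjoin_sound [Finite F] (hg : IsOcticRoot g) (h : Represents g L H hs) {p : ℕ}
    (hp : p < 65536) (hL : L (decode g (fstByte p)) = decode g (sndByte p))
    {k : List ℕ → Bool} (hk : adjoin hs p k = true) :
    ∃ H' : AddSubgroup F, Represents g L H' (doubled p hs) ∧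
      2 * Nat.card H ≤ Nat.card H' ∧ k (doubled p hs) = true := by
  rw [adjoin, Bool.cond_eq_true_distrib] at hk
  split_ifs at hk with hnew
  · refine ⟨_, h.doubled hp hL, two_mul_card_le_card_adjoinElement fun hmem => ?_, hk⟩
    obtain ⟨r, hr, hrp⟩ := (h.mem_iff _).mp hmem
    have := allTrue_iff.mp hnew r hr
    rw [decode_injOn hg (fstByte_lt r) (fstByte_lt p) hrp, Nat.beq_refl] at this
    simp at this
  · refine absurd (allTrue_iff.mpr fun r hr => ?_) hnew
    cases hbeq : Nat.beq (fstByte r) (fstByte p)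
    · rfl
    · have hfst := Nat.eq_of_beq_eq_true hbeq
      have hsnd : sndByte r = sndByte p :=
        decode_injOn hg (sndByte_lt (h.lt r hr)) (sndByte_lt hp)
          (by rw [← h.graph r hr, ← hL, hfst])
      have := allTrue_iff.mp hk r hr
      rw [eq_of_bytes_eq hfst hsnd, Nat.beq_refl] at this
      simp at this

theorem map_decode_eq (hg : IsOcticRoot g) {S : Finset F} {d : ℕ}
    (hS : ∀ s ∈ S, s ^ 3 = L s + decode g d) {n : ℕ} (hn : n < 256)
    (hnS : decode g n ∈ S) :
    L (decode g (fstByte (pack d n))) = decode g (sndByte (pack d n)) := by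
  rw [fstByte_pack hn, sndByte_pack hn, decode_xor, decode_cube hg hn, hS _ hnS, add_assoc,
    CharTwo.add_self_eq_zero, add_zero]

theorem exists_lt_card_fiber_quotient [Fintype F] [DecidableEq F] {r m : ℕ}
    (hH : Nat.card F ≤ (r + 1) * Nat.card H) {S : Finset F} (hS : ∀ x ∈ S, x ∉ H)
    (hcard : m * r < S.card) :
    ∃ C ⊆ S, m < C.card ∧ ∀ x ∈ C, ∀ y ∈ C, x + y ∈ H := by
  classical
  have hindex : Nat.card (F ⧸ H) ≤ r + 1 := by
    have hmul := AddSubgroup.card_eq_card_quotient_mul_card_addSubgroup H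
    rw [hmul] at hH
    exact Nat.le_of_mul_le_mul_right hH Nat.card_pos
  rw [Nat.card_eq_fintype_card] at hindex
  have hmaps : ∀ x ∈ S, (x : F ⧸ H) ∈ (Finset.univ.erase 0 : Finset (F ⧸ H)) := fun x hx =>
    Finset.mem_erase.mpr ⟨fun h0 => hS x hx ((QuotientAddGroup.eq_zero_iff x).mp h0),
      Finset.mem_univ _⟩
  obtain ⟨q, -, hq⟩ := Finset.exists_lt_card_fiber_of_mul_lt_card_of_maps_to hmaps (n := m) (by
    rw [Finset.card_erase_of_mem (Finset.mem_univ _), Finset.card_univ, mul_comm]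
    exact lt_of_le_of_lt (Nat.mul_le_mul_left m (by omega)) hcard)
  refine ⟨_, Finset.filter_subset _ _, hq, fun x hx y hy => ?_⟩
  have hxy := (Finset.mem_filter.mp hx).2.trans (Finset.mem_filter.mp hy).2.symm
  have := QuotientAddGroup.eq.mp hxy
  rwa [CharTwo.neg_eq x] at this

variable {S : Finset F} {d : ℕ}

theorem adjoinTriple_sound [Finite F] (hg : IsOcticRoot g) (h : Represents g L H hs) (hd : d < 256)
    (hS : ∀ s ∈ S, s ^ 3 = L s + decode g d) {t : ℕ} (ht : t < 65536)
    (h1 : decode g (fstByte t) ∈ S) (h2 : decode g (sndByte t) ∈ S)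
    {k : List ℕ → Bool} (hk : adjoinTriple d hs t k = true) :
    ∃ (H' : AddSubgroup F) (hs' : List ℕ), Represents g L H' hs' ∧
      4 * Nat.card H ≤ Nat.card H' ∧ k hs' = true := by
  rw [adjoinTriple_eq] at hk
  obtain ⟨H₁, hr₁, hc₁, hk₁⟩ := adjoin_sound hg h (pack_lt hd (fstByte_lt t))
    (map_decode_eq hg hS (fstByte_lt t) h1) hk
  obtain ⟨H₂, hr₂, hc₂, hk₂⟩ := adjoin_sound hg hr₁ (pack_lt hd (sndByte_lt ht))
    (map_decode_eq hg hS (sndByte_lt ht) h2) hk₁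
  exact ⟨H₂, _, hr₂, by omega, hk₂⟩

variable [DecidableEq F]

theorem card_filter_le_zeros (hg : IsOcticRoot g) (h : Represents g L H hs) (hd : d < 256)
    (hS : ∀ s ∈ S, s ^ 3 = L s + decode g d) [DecidablePred (· ∈ H)] :
    (S.filter (· ∈ H)).card ≤ zeros d hs := by
  refine le_trans (le_trans (Finset.card_le_card fun s hs' => ?_)
    (Finset.card_image_le (f := fun p => decode g (fstByte p))))
    (card_le_zeros (T := hs.toFinset.filter fun p => decode g (fstByte p) ∈ S) fun p hp => ?_)
  · obtain ⟨hsS, hsH⟩ := Finset.mem_filter.mp hs'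
    obtain ⟨p, hp, rfl⟩ := (h.mem_iff s).mp hsH
    exact Finset.mem_image.mpr
      ⟨p, Finset.mem_filter.mpr ⟨List.mem_toFinset.mpr hp, hsS⟩, rfl⟩
  · obtain ⟨hp, hpS⟩ := Finset.mem_filter.mp hp
    rw [List.mem_toFinset] at hp
    refine ⟨hp, decode_injOn hg
      (Nat.xor_lt_two_pow (n := 8) (cube_lt _) (sndByte_lt (h.lt p hp))) hd ?_⟩
    rw [decode_xor, decode_cube hg (fstByte_lt p), hS _ hpS, h.graph p hp, add_right_comm,
      CharTwo.add_self_eq_zero, zero_add]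

variable [Fintype F]

theorem exists_card_le_count_edges (hg : IsOcticRoot g) (hF : Fintype.card F = 256)
    (h : Represents g L H hs) (hS : ∀ s ∈ S, s ^ 3 = L s + decode g d) {C : Finset F}
    (hCS : C ⊆ S) (hC : C.Nonempty) (hCH : ∀ x ∈ C, x ∉ H)
    (hadd : ∀ x ∈ C, ∀ y ∈ C, x + y ∈ H) :
    ∃ n < 256, decode g n ∈ C ∧ C.card ≤ (edges (maskOf hs) hs).count n + 1 := by
  obtain ⟨n, hn, hmin⟩ : ∃ n ∈ (Finset.range 256).filter (decode g · ∈ C),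
      ∀ m ∈ (Finset.range 256).filter (decode g · ∈ C), n ≤ m := by
    refine Finset.exists_min_image _ id ?_
    obtain ⟨x, hx⟩ := hC
    obtain ⟨n, hn, rfl⟩ := exists_decode_eq hg hF x
    exact ⟨n, Finset.mem_filter.mpr ⟨Finset.mem_range.mpr hn, hx⟩⟩
  obtain ⟨hn, hnC⟩ := Finset.mem_filter.mp hn
  rw [Finset.mem_range] at hn
  refine ⟨n, hn, hnC, ?_⟩
  rw [← Finset.card_erase_add_one hnC, add_le_add_iff_right]
  refine le_trans (le_trans (Finset.card_le_card fun y hy => ?_)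
    (Finset.card_image_le (f := fun p => decode g n + decode g (fstByte p))))
    (card_le_count_edges
      (T := hs.toFinset.filter fun p => decode g n + decode g (fstByte p) ∈ C.erase (decode g n))
      fun p hp => ?_)
  · obtain ⟨p, hp, hpy⟩ := (h.mem_iff _).mp (hadd _ hnC y (Finset.mem_of_mem_erase hy))
    have hy' : decode g n + decode g (fstByte p) = y := by
      rw [hpy, ← add_assoc, CharTwo.add_self_eq_zero, zero_add]
    exact Finset.mem_image.mpr
      ⟨p, Finset.mem_filter.mpr ⟨List.mem_toFinset.mpr hp, by rwa [hy']⟩, hy'⟩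
  · obtain ⟨hp, hpC⟩ := Finset.mem_filter.mp hp
    rw [List.mem_toFinset] at hp
    obtain ⟨hne, hpC⟩ := Finset.mem_erase.mp hpC
    have hne0 {x : F} (hx : x ∈ C) : x ≠ 0 := fun h0 => hCH x hx (h0 ▸ H.zero_mem)
    have hcubes : decode g n ^ 3 + (decode g n + decode g (fstByte p)) ^ 3 =
        decode g (sndByte p) := by
      rw [hS _ (hCS hnC), hS _ (hCS hpC), map_add, h.graph p hp]
      linear_combination (L (decode g n) + decode g d) * CharTwo.two_eq_zero (R := F)
    have hedge := edge_spec hg hF (fstByte_lt p) (sndByte_lt (h.lt p hp)) (hne0 hnC) (hne0 hpC)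
      (fun h0 => hne (by rw [h0, add_zero])) hcubes
    have hlt : n ^^^ fstByte p < 256 := Nat.xor_lt_two_pow (n := 8) hn (fstByte_lt p)
    have hle : n ≤ n ^^^ fstByte p :=
      hmin _ (Finset.mem_filter.mpr ⟨Finset.mem_range.mpr hlt, by rwa [decode_xor]⟩)
    refine ⟨hp, Bool.eq_false_iff.mpr fun hmask => ?_, ?_⟩
    · obtain ⟨q, hq, hqe⟩ := memBit_maskOf.mp hmask
      have hmem : decode g (edge (fstByte p) (sndByte p)) ∈ H :=
        (h.mem_iff _).mpr ⟨q, hq, by rw [hqe]⟩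
      rcases hedge with he | he <;> rw [he] at hmem
      · exact hCH _ hnC hmem
      · exact hCH _ hpC hmem
    · rcases hedge with he | he
      · rw [decode_injOn hg (edge_lt _ _) hn he, min_eq_left hle]
      · rw [← decode_xor] at he
        rw [decode_injOn hg (edge_lt _ _) hlt he, Nat.xor_assoc, Nat.xor_self, Nat.xor_zero,
          min_eq_right hle]

theorem exists_lt_count_edges (hg : IsOcticRoot g) (hF : Fintype.card F = 256)
    (h : Represents g L H hs) (hd : d < 256) (hS : ∀ s ∈ S, s ^ 3 = L s + decode g d) {r m : ℕ}
    (hH : 256 ≤ (r + 1) * Nat.card H) (hcard : zeros d hs + m * r < S.card) :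
    ∃ n < 256, decode g n ∈ S ∧ decode g n ∉ H ∧ m ≤ (edges (maskOf hs) hs).count n := by
  classical
  have hsplit := Finset.card_filter_add_card_filter_not (s := S) (· ∈ H)
  have hzeros := card_filter_le_zeros hg h hd hS
  have hout : ∀ x ∈ S.filter (· ∉ H), x ∉ H := fun x hx => (Finset.mem_filter.mp hx).2
  obtain ⟨C, hC, hCcard, hadd⟩ := exists_lt_card_fiber_quotient (m := m)
    (by rwa [Nat.card_eq_fintype_card, hF]) hout (by omega)
  obtain ⟨n, hn, hnC, hcount⟩ := exists_card_le_count_edges hg hF h hS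
    (hC.trans (Finset.filter_subset _ _)) (Finset.card_pos.mp (by omega))
    (fun x hx => hout x (hC hx)) hadd
  obtain ⟨hnS, hnH⟩ := Finset.mem_filter.mp (hC hnC)
  exact ⟨n, hn, hnS, hnH, by omega⟩

theorem hyperplaneTest_sound (hg : IsOcticRoot g) (hF : Fintype.card F = 256)
    (h : Represents g L H hs) (hd : d < 256) (hS : ∀ s ∈ S, s ^ 3 = L s + decode g d)
    (hH : 128 ≤ Nat.card H) (hcard : 17 ≤ S.card) : hyperplaneTest d hs = false := by
  rw [Bool.eq_false_iff, Ne, hyperplaneTest_iff]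
  rintro ⟨hz, hrep⟩
  obtain ⟨n, -, -, -, hcount⟩ :=
    exists_lt_count_edges hg hF h hd hS (r := 1) (m := 4) (by omega) (by omega)
  have h1 := count_le_count_repeated_zero n (edges (maskOf hs) hs)
  have h2 := count_le_count_repeated_zero n (repeated (edges (maskOf hs) hs) 0)
  have h3 := count_le_count_repeated_zero n (repeated (repeated (edges (maskOf hs) hs) 0) 0)
  rw [hrep, List.count_nil] at h3
  omega

theorem sixDimTest_sound (hg : IsOcticRoot g) (hF : Fintype.card F = 256)
    (h : Represents g L H hs) (hd : d < 256) (hS : ∀ s ∈ S, s ^ 3 = L s + decode g d)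
    (hH : 64 ≤ Nat.card H) (hcard : 17 ≤ S.card) : sixDimTest d hs = false := by
  rw [Bool.eq_false_iff, Ne, sixDimTest_iff]
  rintro ⟨hz, hrep⟩
  obtain ⟨n, hn, hnS, hnH, hcount⟩ :=
    exists_lt_count_edges hg hF h hd hS (r := 3) (m := 2) (by omega) (by omega)
  have h1 := count_le_count_repeated_zero n (edges (maskOf hs) hs)
  have hmem := hrep n (List.count_pos_iff.mp (by omega))
  have hdouble := h.doubled (pack_lt hd hn) (map_decode_eq hg hS hn hnS)
  have hnH' : decode g (fstByte (pack d n)) ∉ H := by rwa [fstByte_pack hn]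
  have := two_mul_card_le_card_adjoinElement hnH'
  rw [hyperplaneTest_sound hg hF hdouble hd hS (by omega) hcard] at hmem
  simp at hmem

end Soundness

section Configurations

variable {F : Type*} [Field F] [DecidableEq F]

/-- The three-element subsets of `S` with sum zero. -/
def zeroTriples (S : Finset F) : Finset (Finset F) :=
  (S.powersetCard 3).filter fun t => ∑ x ∈ t, x = 0

/-- A translate of a large set on which `x ^ 3` is affine, with three triples of sum zero. -/
structure IsConfig (S : Finset F) : Prop where
  zero_notMem : 0 ∉ S
  card_ge : 17 ≤ S.card
  affine : ∃ (L : F →+ F) (d : F), ∀ s ∈ S, s ^ 3 = L s + d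
  card_zeroTriples : 3 ≤ (zeroTriples S).card

theorem IsConfig.image {S : Finset F} (hS : IsConfig S) (e : F ≃+ F) (κ : F →+ F)
    (h : ∀ x, e x ^ 3 = κ (x ^ 3)) : IsConfig (S.image e) where
  zero_notMem h0 := by
    obtain ⟨x, hx, hx0⟩ := Finset.mem_image.mp h0
    exact hS.zero_notMem (e.map_eq_zero_iff.mp hx0 ▸ hx)
  card_ge := by
    rw [Finset.card_image_of_injective _ e.injective]
    exact hS.card_ge
  affine := by
    obtain ⟨L, d, hL⟩ := hS.affine
    refine ⟨(κ.comp L).comp e.symm.toAddMonoidHom, κ d, fun s hs => ?_⟩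
    obtain ⟨x, hx, rfl⟩ := Finset.mem_image.mp hs
    rw [h, hL x hx]
    simp
  card_zeroTriples := by
    refine hS.card_zeroTriples.trans (Finset.card_le_card_of_injOn (fun t => t.image e) ?_
      (Finset.image_injective e.injective).injOn)
    intro t ht
    obtain ⟨ht, hsum⟩ := Finset.mem_filter.mp ht
    obtain ⟨hts, hcard⟩ := Finset.mem_powersetCard.mp ht
    refine Finset.mem_filter.mpr ⟨Finset.mem_powersetCard.mpr
      ⟨Finset.image_subset_image hts, ?_⟩, ?_⟩
    · rw [Finset.card_image_of_injective _ e.injective, hcard]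
    · rw [Finset.sum_image e.injective.injOn, ← map_sum, hsum, map_zero]

/-- No triple `a, b, a + b` in a configuration has ratio `b / a = y`. -/
def IsExcluded (y : F) : Prop :=
  ∀ S : Finset F, IsConfig S → ∀ a ∈ S, ∀ b ∈ S, a + b ∈ S → b / a ≠ y

theorem isExcluded_of_one {y : F}
    (h : ∀ S : Finset F, IsConfig S → 1 ∈ S → y ∈ S → 1 + y ∉ S) : IsExcluded y := by
  rintro S hS a ha b hb hab rfl
  have ha0 : a ≠ 0 := fun h0 => hS.zero_notMem (h0 ▸ ha)
  have hmap := hS.image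
    (DistribMulAction.toAddEquiv F (Units.mk0 a⁻¹ (inv_ne_zero ha0)))
    (AddMonoidHom.mulLeft (a⁻¹ ^ 3)) (fun x => by simp [Units.smul_def, mul_pow])
  refine h _ hmap (Finset.mem_image.mpr ⟨a, ha, ?_⟩) (Finset.mem_image.mpr ⟨b, hb, ?_⟩)
    (Finset.mem_image.mpr ⟨a + b, hab, ?_⟩) <;> simp [Units.smul_def] <;> field_simp

theorem IsExcluded.inv {y : F} (h : IsExcluded y) : IsExcluded y⁻¹ := fun S hS a ha b hb hab hy =>
  h S hS b hb a ha (add_comm a b ▸ hab) (by rw [← inv_div, hy, inv_inv])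

variable [CharP F 2]

theorem IsExcluded.add_one {y : F} (h : IsExcluded y) : IsExcluded (y + 1) := by
  intro S hS a ha b hb hab hy
  have ha0 : a ≠ 0 := fun h0 => hS.zero_notMem (h0 ▸ ha)
  refine h S hS a ha (a + b) hab ?_ ?_
  · rwa [← add_assoc, CharTwo.add_self_eq_zero, zero_add]
  · rw [add_div, hy, div_self ha0, add_left_comm, CharTwo.add_self_eq_zero, add_zero]

theorem exists_eq_of_mem_zeroTriples {S t : Finset F} (ht : t ∈ zeroTriples S) {x : F}
    (hx : x ∈ t) : ∃ y, t = {x, y, x + y} ∧ x ∈ S ∧ y ∈ S ∧ x + y ∈ S ∧ x ≠ y := by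
  obtain ⟨ht, hsum⟩ := Finset.mem_filter.mp ht
  obtain ⟨htS, hcard⟩ := Finset.mem_powersetCard.mp ht
  obtain ⟨y, z, hyz, he⟩ := Finset.card_eq_two.mp
    (show (t.erase x).card = 2 by rw [Finset.card_erase_of_mem hx, hcard])
  have htx : t = {x, y, z} := by rw [← Finset.insert_erase hx, he]
  have hxy : x ≠ y := by
    rintro rfl
    have : x ∈ t.erase x := by rw [he]; simp
    simp at this
  have hxz : x ≠ z := by
    rintro rfl
    have : x ∈ t.erase x := by rw [he]; simp
    simp at this
  rw [htx, Finset.sum_insert (by simp [hxy, hxz]), Finset.sum_pair hyz, ← add_assoc,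
    CharTwo.add_eq_zero] at hsum
  subst hsum
  exact ⟨y, htx, htS hx, htS (by rw [htx]; simp), htS (by rw [htx]; simp), hxy⟩

variable [Fintype F]

theorem IsExcluded.of_sq {y : F} (h : IsExcluded (y ^ 2)) : IsExcluded y := by
  rintro S hS a ha b hb hab rfl
  have hfrob (x : F) : frobeniusEquiv F 2 x = x ^ 2 := frobeniusEquiv_apply F 2 x
  have hmap := hS.image (frobeniusEquiv F 2).toAddEquiv (frobeniusEquiv F 2 : F →+ F)
    (fun x => by simp [hfrob, ← pow_mul])
  have hmem {x : F} (hx : x ∈ S) : x ^ 2 ∈ S.image (frobeniusEquiv F 2).toAddEquiv :=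
    Finset.mem_image.mpr ⟨x, hx, hfrob x⟩
  refine h _ hmap (a ^ 2) (hmem ha) (b ^ 2) (hmem hb) ?_ (div_pow b a 2).symm
  rw [← CharTwo.add_sq]
  exact hmem hab

theorem IsExcluded.of_pow {y : F} {i : ℕ} (h : IsExcluded (y ^ 2 ^ i)) : IsExcluded y := by
  induction i with
  | zero => simpa using h
  | succ i ih => exact ih (IsExcluded.of_sq (by rwa [← pow_mul, ← pow_succ]))

variable {g : F}

theorem exists_mem_triples (hg : IsOcticRoot g) (hF : Fintype.card F = 256) {S t : Finset F}
    (hS : IsConfig S) {L : F →+ F} {k d : ℕ} (hd : d < 256)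
    (hL : ∀ s ∈ S, s ^ 3 = L s + decode g d)
    (hk : ∀ n < 256, 1 < n → orbitClass n < k → IsExcluded (decode g n))
    (ht : t ∈ zeroTriples S) (h1 : 1 ∉ t) :
    ∃ u ∈ triples k d 256, u < 65536 ∧ decode g (fstByte u) ∈ S ∧ decode g (sndByte u) ∈ S ∧
      t = {decode g (fstByte u), decode g (sndByte u),
        decode g (fstByte u) + decode g (sndByte u)} := by
  obtain ⟨a, ha, hmin⟩ : ∃ a ∈ (Finset.range 256).filter (decode g · ∈ t),
      ∀ m ∈ (Finset.range 256).filter (decode g · ∈ t), a ≤ m := by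
    refine Finset.exists_min_image _ id ?_
    have hcard := (Finset.mem_powersetCard.mp (Finset.mem_filter.mp ht).1).2
    obtain ⟨x, hx⟩ := Finset.card_pos.mp (show 0 < t.card by omega)
    obtain ⟨n, hn, rfl⟩ := exists_decode_eq hg hF x
    exact ⟨n, Finset.mem_filter.mpr ⟨Finset.mem_range.mpr hn, hx⟩⟩
  obtain ⟨ha, hat⟩ := Finset.mem_filter.mp ha
  rw [Finset.mem_range] at ha
  have hmin' {n : ℕ} (hn : n < 256) (hnt : decode g n ∈ t) : a ≤ n :=
    hmin n (Finset.mem_filter.mpr ⟨Finset.mem_range.mpr hn, hnt⟩)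
  obtain ⟨b, htb, haS, hbS, habS, hab⟩ := exists_eq_of_mem_zeroTriples ht hat
  have hne0 {x : F} (hx : x ∈ S) : x ≠ 0 := fun h0 => hS.zero_notMem (h0 ▸ hx)
  have ha0 : a ≠ 0 := by
    rintro rfl
    exact hne0 haS (decode_zero g)
  have ha1 : a ≠ 1 := by
    rintro rfl
    exact h1 (decode_one g ▸ hat)
  have hedge := edge_spec hg hF ha (cube_xor_lt hd) (hne0 hbS) (by rw [add_comm]; exact hne0 habS)
    (hne0 haS) (show b ^ 3 + (b + decode g a) ^ 3 = decode g (cube a ^^^ d) by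
      have h2 : (2 : F) = 0 := CharTwo.two_eq_zero
      rw [add_comm b (decode g a), hL _ hbS, hL _ habS, decode_xor, decode_cube hg ha, hL _ haS,
        map_add]
      linear_combination L b * h2)
  generalize he : edge a (cube a ^^^ d) = e at hedge
  have he256 : e < 256 := he ▸ ex_lt _
  have hprops : t = {decode g a, decode g e, decode g a + decode g e} ∧ decode g e ∈ S ∧
      decode g a + decode g e ∈ S ∧ decode g a ≠ decode g e := by
    rcases hedge with h | h
    · rw [h]
      exact ⟨htb, hbS, habS, hab⟩
    · have hcancel : decode g a + (b + decode g a) = b := by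
        rw [add_comm b, ← add_assoc, CharTwo.add_self_eq_zero, zero_add]
      rw [h, hcancel, add_comm b]
      refine ⟨htb.trans ?_, habS, hbS, fun h' => hne0 hbS (left_eq_add.mp h')⟩
      rw [Finset.pair_comm]
  obtain ⟨hte, heS, haeS, hae⟩ := hprops
  have hlt : a < e := lt_of_le_of_ne (hmin' he256 (by rw [hte]; simp))
    (by rintro rfl; exact hae rfl)
  have hlt' : a < a ^^^ e := by
    refine lt_of_le_of_ne (hmin' (Nat.xor_lt_two_pow (n := 8) ha he256) ?_) fun h => ?_
    · rw [decode_xor, hte]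
      simp
    · have := congrArg (decode g) h
      rw [decode_xor] at this
      exact hne0 heS (left_eq_add.mp this)
  have hlga := lg_pos a ha (by omega)
  have hlga' := (ex_lg a ha (by omega)).2
  have hratio : decode g (ex (lg e + (255 - lg a))) = decode g e / decode g a := by
    rw [decode_ex_lg_add hg he256 (by omega), ← decode_ex hg (by omega),
      decode_ex_sub_lg hg ha (by omega), div_eq_mul_inv]
  have hclass : k ≤ orbitClass (ex (lg e + (255 - lg a))) := by
    by_contra! hlt
    refine hk _ (ex_lt _) ?_ hlt S hS _ haS _ heS haeS hratio.symm
    by_contra! hle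
    interval_cases hn : ex (lg e + (255 - lg a))
    · rw [decode_zero, eq_comm, div_eq_zero_iff] at hratio
      exact hratio.elim (hne0 heS) (hne0 haS)
    · rw [decode_one, eq_comm, div_eq_one_iff_eq (hne0 haS)] at hratio
      exact hae hratio.symm
  refine ⟨a + 256 * e, ?_, by omega, ?_⟩
  · have := mem_triples (k := k) (d := d) (n := 256) (a := a) (by omega) ha
    rw [he] at this
    exact this hlt hlt' hclass
  · rw [fstByte_add_mul ha, sndByte_add_mul ha]
    exact ⟨haS, heS, hte⟩

theorem isExcluded_representative (hg : IsOcticRoot g) (hF : Fintype.card F = 256) {k : ℕ}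
    (hk8 : k < 8) (hk : ∀ n < 256, 1 < n → orbitClass n < k → IsExcluded (decode g n)) :
    IsExcluded (decode g (representative k)) := by
  refine isExcluded_of_one fun S hS h1 hy h1y => ?_
  obtain ⟨hy1, hy256⟩ := representative_spec k hk8
  have htest := representativeTest_eq_true k hk8
  rw [representativeTest, force_eq, force_eq] at htest
  generalize representative k = y at *
  obtain ⟨L, D, hL⟩ := hS.affine
  have h2 : (2 : F) = 0 := CharTwo.two_eq_zero
  have hD {b : F} (hb : b ∈ S) (h1b : 1 + b ∈ S) : D = b ^ 2 + b := by
    have e1 := hL 1 h1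
    have e2 := hL b hb
    have e3 := hL (1 + b) h1b
    rw [map_add] at e3
    linear_combination e1 + e2 + e3 + (L 1 + L b + 2 * D - 1 - b ^ 3 - 2 * b ^ 2 - 2 * b) * h2
  have hlg := (ex_lg y hy256 (by omega)).2
  change adjoinTriple (ex (lg y + lg y) ^^^ y) [0] (1 + 256 * y) (fun hs =>
    allPairs (ex (lg y + lg y) ^^^ y) hs (triples k (ex (lg y + lg y) ^^^ y) 256)) = true at htest
  have hd : ex (lg y + lg y) ^^^ y < 256 := Nat.xor_lt_two_pow (n := 8) (ex_lt _) hy256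
  have hdD : decode g (ex (lg y + lg y) ^^^ y) = D := by
    rw [decode_xor, decode_ex_lg_add hg hy256 hlg, pow_lg hg hy256 (by omega), hD hy h1y, sq]
  generalize ex (lg y + lg y) ^^^ y = d at htest hd hdD
  rw [← hdD] at hL
  have hone : ∀ t ∈ (zeroTriples S).erase {1, decode g y, 1 + decode g y}, 1 ∉ t := by
    intro t ht h1t
    obtain ⟨hne, ht⟩ := Finset.mem_erase.mp ht
    obtain ⟨b, htb, -, hb, h1b, -⟩ := exists_eq_of_mem_zeroTriples ht h1t
    refine hne (htb.trans ?_)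
    have hprod : (b + decode g y) * (b + (1 + decode g y)) = 0 := by
      linear_combination hD hy h1y - hD hb h1b + (b * decode g y + decode g y ^ 2 + decode g y) * h2
    rcases mul_eq_zero.mp hprod with h | h
    · rw [CharTwo.add_eq_zero.mp h]
    · rw [CharTwo.add_eq_zero.mp h, ← add_assoc, CharTwo.add_self_eq_zero, zero_add,
        Finset.pair_comm]
  obtain ⟨t, u, ht, hu, htu⟩ := Finset.one_lt_card_iff.mp
    (show 1 < ((zeroTriples S).erase {1, decode g y, 1 + decode g y}).card from
      lt_of_lt_of_le (by have := hS.card_zeroTriples; omega) Finset.pred_card_le_card_erase)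
  obtain ⟨m, hm, hm', hm1, hm2, htm⟩ :=
    exists_mem_triples hg hF hS hd hL hk (Finset.mem_of_mem_erase ht) (hone t ht)
  obtain ⟨n, hn, hn', hn1, hn2, hun⟩ :=
    exists_mem_triples hg hF hS hd hL hk (Finset.mem_of_mem_erase hu) (hone u hu)
  have hmn : m ≠ n := by
    rintro rfl
    exact htu (htm.trans hun.symm)
  have hfst : fstByte (1 + 256 * y) = 1 := fstByte_add_mul (by norm_num)
  have hsnd : sndByte (1 + 256 * y) = y := sndByte_add_mul (by norm_num)
  obtain ⟨H₁, hs₁, hr₁, hc₁, hk₁⟩ := adjoinTriple_sound hg (represents_bot g L) hd hL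
    (by omega) (by rwa [hfst, decode_one]) (by rwa [hsnd]) htest
  obtain ⟨m', n', hcases, us, hus, hk₂⟩ := allPairs_sound hk₁ hm hn hmn
  have hbounds : (m' < 65536 ∧ decode g (fstByte m') ∈ S ∧ decode g (sndByte m') ∈ S) ∧
      n' < 65536 ∧ decode g (fstByte n') ∈ S ∧ decode g (sndByte n') ∈ S := by
    rcases hcases with ⟨rfl, rfl⟩ | ⟨rfl, rfl⟩
    · exact ⟨⟨hm', hm1, hm2⟩, hn', hn1, hn2⟩
    · exact ⟨⟨hn', hn1, hn2⟩, hm', hm1, hm2⟩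
  obtain ⟨⟨hb1, hb2, hb3⟩, hb4, hb5, hb6⟩ := hbounds
  obtain ⟨H₂, hs₂, hr₂, hc₂, hk₂⟩ := adjoinTriple_sound hg hr₁ hd hL hb1 hb2 hb3 hk₂
  obtain ⟨H₃, hs₃, hr₃, hc₃, hk₃⟩ := adjoinTriple_sound hg hr₂ hd hL hb4 hb5 hb6
    (allTrue_iff.mp hk₂ n' hus)
  have hbot : Nat.card (⊥ : AddSubgroup F) = 1 := AddSubgroup.card_bot
  rw [sixDimTest_sound hg hF hr₃ hd hL (by omega) hS.card_ge] at hk₃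
  simp at hk₃

theorem isExcluded_of_isExcluded_representative (hg : IsOcticRoot g) {n : ℕ} (hn : n < 256)
    (hn1 : 1 < n) (h : IsExcluded (decode g (representative (orbitClass n)))) :
    IsExcluded (decode g n) := by
  obtain ⟨hclass, i, -, hi⟩ := orbitClass_spec n hn hn1
  obtain ⟨hy1, hy⟩ := representative_spec _ hclass
  generalize representative (orbitClass n) = y at *
  have hy' : y ^^^ 1 < 256 := Nat.xor_lt_two_pow (n := 8) hy (by norm_num)
  have hy1' : 0 < y ^^^ 1 := Nat.pos_of_ne_zero fun h' => by
    have := Nat.xor_eq_zero_iff.mp h'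
    omega
  refine IsExcluded.of_pow (i := i) ?_
  have hlt : 2 ^ i * lg n % 255 < 255 := Nat.mod_lt _ (by norm_num)
  rw [← pow_lg hg hn (by omega), ← pow_mul, mul_comm, ← pow_mod_255 hg, ← decode_ex hg (by omega)]
  simp only [List.mem_cons, List.not_mem_nil, or_false] at hi
  rcases hi with hi | hi | hi | hi | hi | hi <;> rw [hi]
  · exact h
  · rw [decode_xor, decode_one]
    exact h.add_one
  · rw [decode_ex_sub_lg hg hy (by omega)]
    exact h.inv
  · rw [decode_xor, decode_one, decode_ex_sub_lg hg hy (by omega)]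
    exact h.inv.add_one
  · rw [decode_ex_sub_lg hg hy' hy1', decode_xor, decode_one]
    exact h.add_one.inv
  · rw [decode_xor, decode_one, decode_ex_sub_lg hg hy' hy1', decode_xor, decode_one]
    exact h.add_one.inv.add_one

theorem isExcluded_of_orbitClass_lt (hg : IsOcticRoot g) (hF : Fintype.card F = 256) {k : ℕ}
    (hk : k ≤ 8) : ∀ n < 256, 1 < n → orbitClass n < k → IsExcluded (decode g n) := by
  induction k with
  | zero => exact fun _ _ _ h => absurd h (Nat.not_lt_zero _)
  | succ k ih =>
    intro n hn hn1 hlt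
    rcases Nat.lt_succ_iff_lt_or_eq.mp hlt with h | h
    · exact ih (by omega) n hn hn1 h
    · exact isExcluded_of_isExcluded_representative hg hn hn1
        (h ▸ isExcluded_representative hg hF (by omega) (ih (by omega)))

theorem not_isConfig (hg : IsOcticRoot g) (hF : Fintype.card F = 256) (S : Finset F) :
    ¬ IsConfig S := by
  intro hS
  obtain ⟨t, ht⟩ := Finset.card_pos.mp (lt_of_lt_of_le (by norm_num) hS.card_zeroTriples)
  have hcard := (Finset.mem_powersetCard.mp (Finset.mem_filter.mp ht).1).2
  obtain ⟨a, ha⟩ := Finset.card_pos.mp (show 0 < t.card by omega)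
  obtain ⟨b, -, haS, hbS, habS, hab⟩ := exists_eq_of_mem_zeroTriples ht ha
  have hne0 {x : F} (hx : x ∈ S) : x ≠ 0 := fun h0 => hS.zero_notMem (h0 ▸ hx)
  obtain ⟨n, hn, hratio⟩ := exists_decode_eq hg hF (b / a)
  have hn1 : 1 < n := by
    by_contra! hle
    interval_cases n
    · rw [decode_zero, eq_comm, div_eq_zero_iff] at hratio
      exact hratio.elim (hne0 hbS) (hne0 haS)
    · rw [decode_one, eq_comm, div_eq_one_iff_eq (hne0 haS)] at hratio
      exact hab hratio.symm
  exact isExcluded_of_orbitClass_lt hg hF le_rfl n hn hn1 (orbitClass_spec n hn hn1).1 S hS a haS b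
    hbS habS hratio.symm

end Configurations

section Agreement

variable {F : Type*} [Field F] [CharP F 2]

theorem sum_notMem_of_cube_eq {S : Set F} {L : F →+ F} {c : F} (hS : ∀ s ∈ S, s ^ 3 = L s + c)
    {x y z : F} (hx : x ∈ S) (hy : y ∈ S) (hz : z ∈ S) (hxy : x ≠ y) (hxz : x ≠ z) (hyz : y ≠ z) :
    x + y + z ∉ S := by
  intro hw
  have h2 : (2 : F) = 0 := CharTwo.two_eq_zero
  have hprod : (x + y) * (x + z) * (y + z) = 0 := by
    have e := hS _ hw
    rw [map_add, map_add] at e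
    linear_combination e + hS x hx + hS y hy + hS z hz + (2 * c + L x + L y + L z
      - x ^ 3 - y ^ 3 - z ^ 3 - x ^ 2 * y - x ^ 2 * z - y ^ 2 * x - y ^ 2 * z - z ^ 2 * x
      - z ^ 2 * y - 2 * x * y * z) * h2
  simp only [mul_eq_zero, CharTwo.add_eq_zero] at hprod
  tauto

variable [Fintype F]

theorem exists_isOcticRoot (hF : Fintype.card F = 256) : ∃ g : F, IsOcticRoot g := by
  let K := AlgebraicClosure F
  have : CharP K 2 := charP_of_injective_algebraMap (algebraMap F K).injective 2
  obtain ⟨r, hr⟩ := IsAlgClosed.exists_root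
    (Polynomial.X ^ 8 - (Polynomial.X ^ 4 + Polynomial.X ^ 3 + Polynomial.X ^ 2 + 1) :
      Polynomial K) (by
      rw [show Polynomial.degree _ = ((8 : ℕ) : WithBot ℕ) by compute_degree!]
      norm_num)
  have hroot : IsOcticRoot r := by simpa [IsOcticRoot, sub_eq_zero] using hr
  obtain ⟨g, hg⟩ := (Polynomial.splits_X_pow_nat_card_sub_X (K := F)).mem_range_of_isRoot
    (FiniteField.X_pow_card_sub_X_ne_zero F (by rw [Nat.card_eq_fintype_card, hF]; norm_num))
    (i := algebraMap F K) (x := r) (by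
      simp [Nat.card_eq_fintype_card, hF, pow_succ _ 255, pow_255 hroot])
  refine ⟨g, (algebraMap F K).injective ?_⟩
  simpa [IsOcticRoot, ← hg] using hroot

variable [DecidableEq F]

theorem exists_isConfig (hF : Fintype.card F = 256) {S : Finset F} (hcard : 17 ≤ S.card)
    {L : F →+ F} {c : F} (hS : ∀ s ∈ S, s ^ 3 = L s + c) : ∃ T : Finset F, IsConfig T := by
  have h2 : (2 : F) = 0 := CharTwo.two_eq_zero
  have hmaps : ∀ t ∈ S.powersetCard 3, ∑ x ∈ t, x ∈ Sᶜ := by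
    intro t ht
    obtain ⟨hts, h3⟩ := Finset.mem_powersetCard.mp ht
    obtain ⟨x, y, z, hxy, hxz, hyz, rfl⟩ := Finset.card_eq_three.mp h3
    rw [Finset.sum_insert (by simp [hxy, hxz]), Finset.sum_pair hyz, ← add_assoc,
      Finset.mem_compl]
    exact sum_notMem_of_cube_eq (S := S) hS (hts (by simp)) (hts (by simp)) (hts (by simp))
      hxy hxz hyz
  have hchoose : 680 ≤ S.card.choose 3 :=
    (by decide : 680 ≤ Nat.choose 17 3).trans (Nat.choose_le_choose 3 hcard)
  obtain ⟨w, hw, hfiber⟩ := Finset.exists_lt_card_fiber_of_mul_lt_card_of_maps_to (n := 2) hmaps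
    (by rw [Finset.card_compl, Finset.card_powersetCard, hF]; omega)
  have hinj : Function.Injective (· + w) := add_left_injective w
  refine ⟨S.image (· + w), ?_, ?_, ?_, ?_⟩
  · intro h0
    obtain ⟨x, hx, hxw⟩ := Finset.mem_image.mp h0
    exact Finset.mem_compl.mp hw (CharTwo.add_eq_zero.mp hxw ▸ hx)
  · rwa [Finset.card_image_of_injective _ hinj]
  · refine ⟨L + (AddMonoidHom.mulLeft w).comp (frobenius F 2 : F →+ F) +
      AddMonoidHom.mulLeft (w ^ 2), c + L w + w ^ 3, fun s hs => ?_⟩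
    obtain ⟨x, hx, rfl⟩ := Finset.mem_image.mp hs
    simp only [AddMonoidHom.add_apply, AddMonoidHom.comp_apply, AddMonoidHom.coe_mulLeft,
      AddMonoidHom.coe_coe, frobenius_def, map_add]
    linear_combination hS x hx + (x ^ 2 * w + x * w ^ 2 - L w - w ^ 3) * h2
  · refine (Nat.succ_le_of_lt hfiber).trans (Finset.card_le_card_of_injOn (Finset.image (· + w)) ?_
      (Finset.image_injective hinj).injOn)
    intro t ht
    obtain ⟨ht, hsum⟩ := Finset.mem_filter.mp ht
    obtain ⟨hts, h3⟩ := Finset.mem_powersetCard.mp ht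
    refine Finset.mem_filter.mpr ⟨Finset.mem_powersetCard.mpr
      ⟨Finset.image_subset_image hts, ?_⟩, ?_⟩
    · rw [Finset.card_image_of_injective _ hinj, h3]
    · rw [Finset.sum_image hinj.injOn, Finset.sum_add_distrib, hsum, Finset.sum_const, h3,
        nsmul_eq_mul]
      push_cast
      linear_combination 2 * w * h2

end Agreement

end GoldCube

theorem gold_cube_dim8_far_from_affine
    (f : GaloisField 2 8 → GaloisField 2 8) (hf : ∀ x, f x = x ^ 3) :
    (∀ (L : GaloisField 2 8 →ₗ[ZMod 2] GaloisField 2 8) (c : GaloisField 2 8),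
        240 ≤ {x : GaloisField 2 8 | f x ≠ L x + c}.ncard) ∧
      240 ≤ dA f := by
  have hdist (L : GaloisField 2 8 →ₗ[ZMod 2] GaloisField 2 8) (c : GaloisField 2 8) :
      240 ≤ {x : GaloisField 2 8 | f x ≠ L x + c}.ncard := by
    classical
    have : Fintype (GaloisField 2 8) := Fintype.ofFinite _
    have hF : Fintype.card (GaloisField 2 8) = 256 := by
      rw [← Nat.card_eq_fintype_card, GaloisField.card 2 8 (by norm_num)]
      norm_num
    by_contra! hlt
    rw [Set.ncard_eq_toFinset_card', Set.toFinset_ofPred] at hlt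
    have hsum := Finset.card_filter_add_card_filter_not (s := Finset.univ)
      fun x => f x = L x + c
    simp only [← ne_eq, Finset.card_univ, hF] at hsum
    obtain ⟨g, hg⟩ := GoldCube.exists_isOcticRoot hF
    obtain ⟨T, hT⟩ := GoldCube.exists_isConfig hF (S := {x | f x = L x + c})
      (L := L.toAddMonoidHom) (c := c) (by omega) fun s hs => by
        rw [← hf]
        exact (Finset.mem_filter.mp hs).2
    exact GoldCube.not_isConfig hg hF T hT
  refine ⟨hdist, le_csInf ⟨_, 0, 0, rfl⟩ ?_⟩
  rintro _ ⟨L, c, rfl⟩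
  exact hdist L c
end
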